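/- arXiv:1003.5072 — 3 statements merged into one kernel-verified Lean document; each statement's English description precedes it below -/
import Mathlib

section
/- Let n ≥ 1, let u₁, u₂ > 0 and set q₁ = 1/(2u₁). Then for every bounded Lipschitz function f : ℝ^n → ℝ and every x ∈ ℝ^n, P_{u₁}( e^{q₁ Q_1 f} )(x) ≤ exp( q₁ P_{u₂} f (x) ) · exp( (n/2) · ( u₂/u₁ − 1 − log(u₂/u₁) ) ) (the exponential-integrability form of the dimensional local transportation inequality for the heat semigroup on ℝ^n). -/
open MeasureTheory Real

/-- Euclidean heat semigroup, with `heat n 0 f = f`. -/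
noncomputable def heat (n : ℕ) (t : ℝ) (f : EuclideanSpace ℝ (Fin n) → ℝ)
    (x : EuclideanSpace ℝ (Fin n)) : ℝ :=
  if t = 0 then f x
  else (4 * π * t) ^ (-(n : ℝ) / 2) * ∫ y, f y * Real.exp (-‖x - y‖ ^ 2 / (4 * t))

/-- Hopf-Lax (Hamilton-Jacobi) semigroup on `ℝ^n`. -/
noncomputable def hopfLax (n : ℕ) (t : ℝ) (f : EuclideanSpace ℝ (Fin n) → ℝ)
    (x : EuclideanSpace ℝ (Fin n)) : ℝ :=
  ⨅ y : EuclideanSpace ℝ (Fin n), (f y + ‖x - y‖ ^ 2 / (2 * t))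

/-- Infimal convolution of `f` with the translation-invariant cost `c`. -/
noncomputable def infConv {E : Type*} [AddCommGroup E] (c f : E → ℝ) (x : E) : ℝ :=
  ⨅ y, (f y + c (x - y))

section InfConv

variable {E : Type*} {c f : E → ℝ} {C : ℝ}

lemma bddBelow_range_infConv [AddCommGroup E] (hc : ∀ x, 0 ≤ c x) (hf : ∀ x, |f x| ≤ C) (x : E) :
    BddBelow (Set.range fun y => f y + c (x - y)) := by
  refine ⟨-C, ?_⟩
  rintro _ ⟨y, rfl⟩
  have := neg_le_of_abs_le (hf y)
  have := hc (x - y)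
  dsimp only
  linarith

lemma infConv_le [AddCommGroup E] (hc : ∀ x, 0 ≤ c x) (hf : ∀ x, |f x| ≤ C) (x y : E) :
    infConv c f x ≤ f y + c (x - y) :=
  ciInf_le (bddBelow_range_infConv hc hf x) y

lemma abs_infConv_le [AddCommGroup E] (hc : ∀ x, 0 ≤ c x) (hc0 : c 0 = 0)
    (hf : ∀ x, |f x| ≤ C) (x : E) : |infConv c f x| ≤ C := by
  rw [abs_le]
  constructor
  · refine le_ciInf fun y => ?_
    have := neg_le_of_abs_le (hf y)
    have := hc (x - y)
    linarith
  · have := infConv_le hc hf x x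
    rw [sub_self, hc0, add_zero] at this
    exact this.trans (le_of_abs_le (hf x))

lemma lipschitzWith_infConv [NormedAddCommGroup E] (hc : ∀ x, 0 ≤ c x) (hf : ∀ x, |f x| ≤ C)
    {L : NNReal} (hL : LipschitzWith L f) : LipschitzWith L (infConv c f) := by
  refine LipschitzWith.of_le_add_mul L fun x y => ?_
  rw [← sub_le_iff_le_add]
  refine le_ciInf fun z => ?_
  have h1 := infConv_le hc hf x (x - y + z)
  have h2 := hL.le_add_mul (x - y + z) z
  have h3 : dist (x - y + z) z = dist x y := by
    rw [dist_eq_norm, dist_eq_norm, add_sub_cancel_right]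
  have h4 : x - (x - y + z) = y - z := by abel
  rw [h4] at h1
  rw [h3] at h2
  linarith

end InfConv

/-- Monotone rearrangement of a positive continuous probability density on `ℝ` onto another. -/
lemma exists_monotone_transport {p ρ : ℝ → ℝ} (hp : Continuous p) (hρ : Continuous ρ)
    (hp0 : ∀ x, 0 < p x) (hρ0 : ∀ x, 0 < ρ x) (hpi : Integrable p) (hρi : Integrable ρ)
    (hp1 : ∫ x, p x = 1) (hρ1 : ∫ x, ρ x = 1) :
    ∃ T : ℝ → ℝ, (∀ y, HasDerivAt T (p y / ρ (T y)) y) ∧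
      ∀ y, ∫ x in Set.Iic (T y), ρ x = ∫ x in Set.Iic y, p x := by
  have deriv_cdf : ∀ {g : ℝ → ℝ}, Continuous g → Integrable g →
      ∀ y, HasDerivAt (fun z => ∫ x in Set.Iic z, g x) (g y) y := by
    intro g hg hgi y
    have h : (fun z => ∫ x in Set.Iic z, g x) =
        fun z => (∫ x in Set.Iic 0, g x) + ∫ x in (0:ℝ)..z, g x := by
      funext z
      rw [← intervalIntegral.integral_Iic_sub_Iic hgi.integrableOn hgi.integrableOn]
      ring
    rw [h]
    exact (intervalIntegral.integral_hasDerivAt_right (hg.intervalIntegrable _ _)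
      (hg.stronglyMeasurableAtFilter _ _) hg.continuousAt).const_add _
  have pos_tail : ∀ {g : ℝ → ℝ}, Integrable g → (∀ x, 0 < g x) → ∀ s : Set ℝ,
      MeasurableSet s → volume s ≠ 0 → 0 < ∫ x in s, g x := by
    intro g hgi hg0 s hs hvs
    rw [setIntegral_pos_iff_support_of_nonneg_ae (Filter.Eventually.of_forall fun x => (hg0 x).le)
      hgi.integrableOn]
    have : Function.support g = Set.univ := by
      ext x; simp [(hg0 x).ne']
    rw [this, Set.univ_inter]
    exact pos_iff_ne_zero.mpr hvs
  have cdf_mem : ∀ {g : ℝ → ℝ}, Integrable g → (∀ x, 0 < g x) → ∫ x, g x = 1 → ∀ y,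
      (∫ x in Set.Iic y, g x) ∈ Set.Ioo (0:ℝ) 1 := by
    intro g hgi hg0 hg1 y
    refine ⟨pos_tail hgi hg0 _ measurableSet_Iic (by simp), ?_⟩
    have h1 := pos_tail hgi hg0 (Set.Ioi y) measurableSet_Ioi (by simp)
    have h2 := intervalIntegral.integral_Iic_add_Ioi (b := y) hgi.integrableOn hgi.integrableOn
    linarith
  set F : ℝ → ℝ := fun z => ∫ x in Set.Iic z, ρ x with hF
  have hFd : ∀ y, HasDerivAt F (ρ y) y := deriv_cdf hρ hρi
  have hFmono : StrictMono F := strictMono_of_deriv_pos fun y => by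
    rw [(hFd y).deriv]; exact hρ0 y
  have hFc : Continuous F := continuous_iff_continuousAt.mpr fun y => (hFd y).continuousAt
  have hbot : Filter.Tendsto F Filter.atBot (nhds 0) :=
    tendsto_integral_Iic_zero Filter.tendsto_id
  have htop : Filter.Tendsto F Filter.atTop (nhds 1) := by
    rw [← hρ1]
    exact (aecover_Iic Filter.tendsto_id).integral_tendsto_of_countably_generated hρi
  have hsurj : ∀ t ∈ Set.Ioo (0:ℝ) 1, ∃ z, F z = t := by
    intro t ht
    exact mem_range_of_exists_le_of_exists_ge hFc
      (((hbot.eventually (gt_mem_nhds ht.1)).exists).imp fun _ h => h.le)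
      (((htop.eventually (lt_mem_nhds ht.2)).exists).imp fun _ h => h.le)
  choose! G hG using hsurj
  have hGF : ∀ z, G (F z) = z := fun z =>
    hFmono.injective (hG _ (cdf_mem hρi hρ0 hρ1 z))
  have hGmono : StrictMonoOn G (Set.Ioo 0 1) := by
    intro s hs t ht hst
    rw [← hFmono.lt_iff_lt, hG s hs, hG t ht]
    exact hst
  have himg : G '' Set.Ioo 0 1 = Set.univ :=
    Set.eq_univ_of_forall fun z => ⟨F z, cdf_mem hρi hρ0 hρ1 z, hGF z⟩
  have hGd : ∀ t ∈ Set.Ioo (0:ℝ) 1, HasDerivAt G (ρ (G t))⁻¹ t := by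
    intro t ht
    have hnhds : Set.Ioo (0:ℝ) 1 ∈ nhds t := isOpen_Ioo.mem_nhds ht
    refine HasDerivAt.of_local_left_inverse ?_ (hFd (G t)) (hρ0 _).ne' ?_
    · exact hGmono.continuousAt_of_image_mem_nhds hnhds (by rw [himg]; exact Filter.univ_mem)
    · exact Filter.eventually_of_mem hnhds hG
  refine ⟨fun y => G (∫ x in Set.Iic y, p x), fun y => ?_, fun y =>
    hG _ (cdf_mem hpi hp0 hp1 y)⟩
  have := (hGd _ (cdf_mem hpi hp0 hp1 y)).comp y (deriv_cdf hp hpi y)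
  rwa [inv_mul_eq_div] at this

/-- The one-dimensional heat kernel at time `u`. -/
noncomputable def heatKernel (u y : ℝ) : ℝ := (√(4 * π * u))⁻¹ * exp (-y ^ 2 / (4 * u))

section HeatKernel

variable {u : ℝ}

lemma heatKernel_pos (hu : 0 < u) (y : ℝ) : 0 < heatKernel u y := by
  unfold heatKernel; positivity

lemma continuous_heatKernel (u : ℝ) : Continuous (heatKernel u) := by
  unfold heatKernel; fun_prop

lemma heatKernel_eq_gaussianPDFReal (hu : 0 < u) :
    heatKernel u = ProbabilityTheory.gaussianPDFReal 0 (2 * u).toNNReal := by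
  funext y
  rw [heatKernel, ProbabilityTheory.gaussianPDFReal, Real.coe_toNNReal _ (by positivity), sub_zero]
  ring_nf

lemma integrable_heatKernel (hu : 0 < u) : Integrable (heatKernel u) := by
  rw [heatKernel_eq_gaussianPDFReal hu]
  exact ProbabilityTheory.integrable_gaussianPDFReal _ _

lemma integral_heatKernel (hu : 0 < u) : ∫ y, heatKernel u y = 1 := by
  rw [heatKernel_eq_gaussianPDFReal hu]
  exact ProbabilityTheory.integral_gaussianPDFReal_eq_one _ (by simpa using hu)

lemma integrable_sq_mul_heatKernel (hu : 0 < u) : Integrable fun y => y ^ 2 * heatKernel u y := by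
  have h := (integrable_rpow_mul_exp_neg_mul_sq (b := (4 * u)⁻¹) (by positivity)
    (s := 2) (by norm_num)).const_mul (√(4 * π * u))⁻¹
  refine h.congr (Filter.Eventually.of_forall fun y => ?_)
  simp only [heatKernel, Real.rpow_two]
  rw [show -(4 * u)⁻¹ * y ^ 2 = -y ^ 2 / (4 * u) by field_simp]
  ring

lemma hasDerivAt_heatKernel (u y : ℝ) :
    HasDerivAt (heatKernel u) (-(y / (2 * u)) * heatKernel u y) y := by
  have h := ((((hasDerivAt_pow 2 y).neg).div_const (4 * u)).exp).const_mul (√(4 * π * u))⁻¹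
  refine h.congr_deriv ?_
  simp only [heatKernel, Pi.neg_apply]
  rw [show y / (2 * u) = 2 * y / (4 * u) by
    rw [show 4 * u = 2 * (2 * u) by ring, mul_div_mul_left _ _ two_ne_zero]]
  push_cast
  ring

lemma integral_sq_mul_heatKernel (hu : 0 < u) : ∫ y, y ^ 2 * heatKernel u y = 2 * u := by
  have hv : (2 * u).toNNReal ≠ 0 := by simpa using hu
  have h := ProbabilityTheory.variance_fun_id_gaussianReal (μ := 0) (v := (2 * u).toNNReal)
  rw [ProbabilityTheory.variance_of_integral_eq_zero (by fun_prop) (by simp),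
    ProbabilityTheory.integral_gaussianReal_eq_integral_smul hv,
    ← heatKernel_eq_gaussianPDFReal hu, Real.coe_toNNReal _ (by positivity)] at h
  rw [← h]
  exact integral_congr_ae (Filter.Eventually.of_forall fun y => by simp [mul_comm])

lemma log_heatKernel (hu : 0 < u) (y : ℝ) :
    log (heatKernel u y) = -(log (4 * π * u) / 2) - y ^ 2 / (4 * u) := by
  rw [heatKernel, log_mul (by positivity) (by positivity), log_exp, log_inv,
    log_sqrt (by positivity)]
  ring

/-- The mass of the heat kernel in a tail dominates its value one unit further out. -/
lemma heatKernel_le_integral_Ioi (hu : 0 < u) {R : ℝ} (hR : 0 ≤ R) :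
    heatKernel u (R + 1) ≤ ∫ y in Set.Ioi R, heatKernel u y := by
  have hi := integrable_heatKernel hu
  calc heatKernel u (R + 1) = ∫ _ in Set.Ioc R (R + 1), heatKernel u (R + 1) := by simp
    _ ≤ ∫ y in Set.Ioc R (R + 1), heatKernel u y := by
        refine setIntegral_mono_on (by simp) hi.integrableOn measurableSet_Ioc fun y hy => ?_
        have hy0 : 0 ≤ y := hR.trans hy.1.le
        unfold heatKernel
        gcongr
        exact hy.2
    _ ≤ ∫ y in Set.Ioi R, heatKernel u y :=
        setIntegral_mono_set hi.integrableOn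
          (Filter.Eventually.of_forall fun y => (heatKernel_pos hu y).le)
          (Filter.Eventually.of_forall fun y hy => hy.1)

lemma heatKernel_le_integral_Iic (hu : 0 < u) {R : ℝ} (hR : 0 ≤ R) :
    heatKernel u (R + 1) ≤ ∫ y in Set.Iic (-R), heatKernel u y := by
  refine (heatKernel_le_integral_Ioi hu hR).trans_eq ?_
  rw [← integral_comp_neg_Ioi]
  simp [heatKernel]

lemma tendsto_sqrt_heatKernel_sq_div (hu : 0 < u) (M : ℝ) :
    Filter.Tendsto (fun R => √(M * (heatKernel u R ^ 2 / heatKernel u (R + 1))))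
      Filter.atTop (nhds 0) := by
  have h1 : ∀ R, heatKernel u R ^ 2 / heatKernel u (R + 1) =
      (√(4 * π * u))⁻¹ * exp ((R * (2 - R) + 1) / (4 * u)) := by
    intro R
    have : (√(4 * π * u))⁻¹ ≠ 0 := by positivity
    rw [heatKernel, heatKernel, mul_pow, ← Real.exp_nat_mul, sq (√(4 * π * u))⁻¹, mul_assoc,
      mul_div_mul_left _ _ this, mul_div_assoc, ← Real.exp_sub]
    congr 2
    push_cast
    ring
  simp_rw [h1]
  have h2 : Filter.Tendsto (fun R : ℝ => (R * (2 - R) + 1) / (4 * u))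
      Filter.atTop Filter.atBot := by
    refine Filter.Tendsto.atBot_div_const (by positivity) ?_
    refine Filter.tendsto_atBot_add_const_right _ _ ?_
    exact Filter.tendsto_id.atTop_mul_atBot₀
      (Filter.tendsto_atBot_add_const_left _ _ Filter.tendsto_neg_atTop_atBot)
  have h3 := ((tendsto_exp_atBot.comp h2).const_mul (√(4 * π * u))⁻¹).const_mul M
  simpa using h3.sqrt

end HeatKernel

/-- Chebyshev's tail bound in terms of the second moment. -/
lemma sq_mul_integral_Ioi_le {ρ : ℝ → ℝ} (hρ0 : ∀ x, 0 ≤ ρ x) (hρ : Integrable ρ)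
    (hρ2 : Integrable fun x => x ^ 2 * ρ x) {z : ℝ} (hz : 0 ≤ z) :
    z ^ 2 * ∫ x in Set.Ioi z, ρ x ≤ ∫ x, x ^ 2 * ρ x := by
  rw [← integral_const_mul]
  refine (setIntegral_mono_on (hρ.const_mul _).integrableOn hρ2.integrableOn measurableSet_Ioi
    fun x hx => ?_).trans (setIntegral_le_integral hρ2
      (Filter.Eventually.of_forall fun x => mul_nonneg (sq_nonneg x) (hρ0 x)))
  have := hρ0 x
  have : z ≤ x := le_of_lt hx
  gcongr

lemma sq_mul_integral_Iic_le {ρ : ℝ → ℝ} (hρ0 : ∀ x, 0 ≤ ρ x) (hρ : Integrable ρ)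
    (hρ2 : Integrable fun x => x ^ 2 * ρ x) {z : ℝ} (hz : z ≤ 0) :
    z ^ 2 * ∫ x in Set.Iic z, ρ x ≤ ∫ x, x ^ 2 * ρ x := by
  have h := sq_mul_integral_Ioi_le (ρ := fun x => ρ (-x)) (fun x => hρ0 _) hρ.comp_neg
    (by simpa using hρ2.comp_neg) (neg_nonneg.mpr hz)
  rw [integral_comp_neg_Ioi, neg_neg, neg_sq] at h
  refine h.trans_eq ?_
  rw [← integral_neg_eq_self (fun x => x ^ 2 * ρ x)]
  exact integral_congr_ae (Filter.Eventually.of_forall fun x => by simp only [neg_sq])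

/-- The mass transport flux `T · heatKernel` through `±R` of a monotone rearrangement of the heat
kernel onto a density with finite second moment is controlled by that moment. -/
lemma transport_flux_le {u : ℝ} (hu : 0 < u) {ρ T : ℝ → ℝ} (hρ0 : ∀ x, 0 ≤ ρ x)
    (hρ : Integrable ρ) (hρ1 : ∫ x, ρ x = 1) (hρ2 : Integrable fun x => x ^ 2 * ρ x)
    (hT : ∀ y, ∫ x in Set.Iic (T y), ρ x = ∫ x in Set.Iic y, heatKernel u x) {R : ℝ}
    (hR : 0 ≤ R) :
    T R * heatKernel u R - T (-R) * heatKernel u (-R) ≤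
      2 * √((∫ x, x ^ 2 * ρ x) * (heatKernel u R ^ 2 / heatKernel u (R + 1))) := by
  set M := ∫ x, x ^ 2 * ρ x
  have hk := integrable_heatKernel hu
  have hkR := heatKernel_pos hu R
  have hkR1 := heatKernel_pos hu (R + 1)
  have bound : ∀ t : ℝ, t ^ 2 * heatKernel u (R + 1) ≤ M →
      t * heatKernel u R ≤ √(M * (heatKernel u R ^ 2 / heatKernel u (R + 1))) := by
    intro t ht
    refine Real.le_sqrt_of_sq_le ?_
    rw [mul_pow, mul_div_assoc', le_div_iff₀ hkR1]
    nlinarith [sq_nonneg (heatKernel u R)]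
  have hright : T R * heatKernel u R ≤ √(M * (heatKernel u R ^ 2 / heatKernel u (R + 1))) := by
    rcases le_total (T R) 0 with h | h
    · exact (mul_nonpos_of_nonpos_of_nonneg h hkR.le).trans (Real.sqrt_nonneg _)
    · refine bound _ (le_trans ?_ (sq_mul_integral_Ioi_le hρ0 hρ hρ2 h))
      have h1 := intervalIntegral.integral_Iic_add_Ioi (b := T R) hρ.integrableOn hρ.integrableOn
      have h2 := intervalIntegral.integral_Iic_add_Ioi (b := R) hk.integrableOn hk.integrableOn
      rw [hρ1] at h1
      rw [integral_heatKernel hu] at h2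
      have h3 : ∫ x in Set.Ioi (T R), ρ x = ∫ x in Set.Ioi R, heatKernel u x := by
        linarith [hT R]
      rw [h3]
      exact mul_le_mul_of_nonneg_left (heatKernel_le_integral_Ioi hu hR) (sq_nonneg _)
  have hleft : -T (-R) * heatKernel u R ≤
      √(M * (heatKernel u R ^ 2 / heatKernel u (R + 1))) := by
    rcases le_total 0 (T (-R)) with h | h
    · exact (mul_nonpos_of_nonpos_of_nonneg (by linarith) hkR.le).trans (Real.sqrt_nonneg _)
    · refine bound _ (le_trans ?_ (sq_mul_integral_Iic_le hρ0 hρ hρ2 h))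
      rw [hT, neg_sq]
      exact mul_le_mul_of_nonneg_left (heatKernel_le_integral_Iic hu hR) (sq_nonneg _)
  have : heatKernel u (-R) = heatKernel u R := by simp [heatKernel]
  rw [this]
  linarith

/-- The one-dimensional inequality, centred at the origin. -/
lemma integral_exp_infConv_mul_heatKernel_le {u₁ u₂ : ℝ} (hu₁ : 0 < u₁) (hu₂ : 0 < u₂)
    {f : ℝ → ℝ} {L : NNReal} (hL : LipschitzWith L f) {C : ℝ} (hC : ∀ x, |f x| ≤ C) :
    ∫ y, exp (1 / (2 * u₁) * infConv (fun t => t ^ 2 / 2) f y) * heatKernel u₁ y ≤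
      exp (1 / (2 * u₁) * (∫ y, f y * heatKernel u₂ y) +
        1 / 2 * (u₂ / u₁ - 1 - log (u₂ / u₁))) := by
  set q := 1 / (2 * u₁) with hq
  have hq0 : 0 < q := by positivity
  set Q := infConv (fun t : ℝ => t ^ 2 / 2) f
  have hcost : ∀ t : ℝ, 0 ≤ t ^ 2 / 2 := fun t => by positivity
  have hQle : ∀ x y, Q x ≤ f y + (x - y) ^ 2 / 2 := infConv_le hcost hC
  have hQabs : ∀ x, |Q x| ≤ C := abs_infConv_le hcost (by simp) hC
  have hQc : Continuous Q := (lipschitzWith_infConv hcost hC hL).continuous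
  have hEc : Continuous fun y => exp (q * Q y) := by fun_prop
  have hEb : ∀ y, ‖exp (q * Q y)‖ ≤ exp (q * C) := fun y => by
    rw [Real.norm_eq_abs, Real.abs_exp]
    exact exp_le_exp.mpr (mul_le_mul_of_nonneg_left (le_of_abs_le (hQabs y)) hq0.le)
  have hk₁ := integrable_heatKernel hu₁
  have hk₂ := integrable_heatKernel hu₂
  set W := ∫ y, exp (q * Q y) * heatKernel u₁ y
  have hWi : Integrable fun y => exp (q * Q y) * heatKernel u₁ y :=
    hk₁.bdd_mul hEc.aestronglyMeasurable (Filter.Eventually.of_forall hEb)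
  have hW : 0 < W := by
    refine (integral_pos_iff_support_of_nonneg
      (fun y => (mul_pos (exp_pos _) (heatKernel_pos hu₁ y)).le) hWi).mpr ?_
    have : Function.support (fun y => exp (q * Q y) * heatKernel u₁ y) = Set.univ := by
      ext y; simp [(heatKernel_pos hu₁ y).ne']
    simp [this]
  set ρ : ℝ → ℝ := fun y => exp (q * Q y) * heatKernel u₁ y / W with hρdef
  have hρ0 : ∀ y, 0 < ρ y := fun y => div_pos (mul_pos (exp_pos _) (heatKernel_pos hu₁ y)) hW
  have hρc : Continuous ρ := (hEc.mul (continuous_heatKernel u₁)).div_const W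
  have hρi : Integrable ρ := hWi.div_const W
  have hρ1 : ∫ y, ρ y = 1 := by
    rw [integral_div]; exact div_self hW.ne'
  have hρ2 : Integrable fun y => y ^ 2 * ρ y := by
    refine ((((integrable_sq_mul_heatKernel hu₁).bdd_mul hEc.aestronglyMeasurable
      (Filter.Eventually.of_forall hEb))).div_const W).congr (Filter.Eventually.of_forall fun y => ?_)
    simp only [hρdef]
    ring
  obtain ⟨T, hTd, hT⟩ := exists_monotone_transport (continuous_heatKernel u₂) hρc
    (heatKernel_pos hu₂) hρ0 hk₂ hρi (integral_heatKernel hu₂) hρ1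
  set dT : ℝ → ℝ := fun y => heatKernel u₂ y / ρ (T y) with hdT
  have hTc : Continuous T := continuous_iff_continuousAt.mpr fun y => (hTd y).continuousAt
  have hdTc : Continuous dT :=
    (continuous_heatKernel u₂).div (hρc.comp hTc) fun y => (hρ0 _).ne'
  have hdT0 : ∀ y, 0 < dT y := fun y => div_pos (heatKernel_pos hu₂ y) (hρ0 _)
  set a := u₂ / u₁ with ha
  have ha0 : 0 < a := div_pos hu₂ hu₁
  set A := 1 / (4 * u₁) + 1 / (4 * u₂) with hA
  set B := -(log a / 2) - 1 with hB
  have hpt : ∀ y, log W ≤ q * f y + A * y ^ 2 + B + (a * dT y - y / (2 * u₁) * T y) := by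
    intro y
    have h1 : log (dT y) = log (heatKernel u₂ y) -
        (q * Q (T y) + log (heatKernel u₁ (T y)) - log W) := by
      rw [hdT, log_div (heatKernel_pos hu₂ y).ne' (hρ0 _).ne', hρdef,
        log_div (mul_pos (exp_pos _) (heatKernel_pos hu₁ _)).ne' hW.ne',
        log_mul (exp_pos _).ne' (heatKernel_pos hu₁ _).ne', log_exp]
    rw [log_heatKernel hu₁, log_heatKernel hu₂] at h1
    have h2 : log (4 * π * u₂) = log (4 * π * u₁) + log a := by
      rw [← log_mul (by positivity) ha0.ne']
      congr 1
      rw [ha]; field_simp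
    have h3 : log (dT y) + log a ≤ a * dT y - 1 := by
      rw [add_comm, ← log_mul ha0.ne' (hdT0 y).ne']
      exact log_le_sub_one_of_pos (mul_pos ha0 (hdT0 y))
    have h4 := mul_le_mul_of_nonneg_left (hQle (T y) y) hq0.le
    have h5 : q * ((T y - y) ^ 2 / 2) - T y ^ 2 / (4 * u₁) + y ^ 2 / (4 * u₂) =
        A * y ^ 2 - y / (2 * u₁) * T y := by
      rw [hq, hA]; field_simp; ring
    rw [hB]
    linarith
  have hflux : ∀ y, HasDerivAt (fun y => a * (T y * heatKernel u₂ y))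
      ((a * dT y - y / (2 * u₁) * T y) * heatKernel u₂ y) y := by
    intro y
    refine (((hTd y).mul (hasDerivAt_heatKernel u₂ y)).const_mul a).congr_deriv ?_
    have : a * (y / (2 * u₂)) = y / (2 * u₁) := by rw [ha]; field_simp
    rw [← this, hdT]
    ring
  have hk₂c := continuous_heatKernel u₂
  have hfc := hL.continuous
  have hfk : Integrable fun y => f y * heatKernel u₂ y :=
    hk₂.bdd_mul hfc.aestronglyMeasurable (Filter.Eventually.of_forall hC)
  have hqA : Integrable fun y => q * (f y * heatKernel u₂ y) + A * (y ^ 2 * heatKernel u₂ y) :=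
    (hfk.const_mul q).add ((integrable_sq_mul_heatKernel hu₂).const_mul A)
  have hsplit : ∀ y, (q * f y + A * y ^ 2 + B) * heatKernel u₂ y =
      q * (f y * heatKernel u₂ y) + A * (y ^ 2 * heatKernel u₂ y) + B * heatKernel u₂ y :=
    fun y => by ring
  have hgi : Integrable fun y => (q * f y + A * y ^ 2 + B) * heatKernel u₂ y := by
    simp_rw [hsplit]
    exact hqA.add (hk₂.const_mul B)
  have hg : ∫ y, (q * f y + A * y ^ 2 + B) * heatKernel u₂ y =
      q * (∫ y, f y * heatKernel u₂ y) + A * (2 * u₂) + B := by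
    simp_rw [hsplit]
    rw [integral_add hqA
      (hk₂.const_mul B), integral_add (hfk.const_mul q)
      ((integrable_sq_mul_heatKernel hu₂).const_mul A), integral_const_mul, integral_const_mul,
      integral_const_mul, integral_heatKernel hu₂, integral_sq_mul_heatKernel hu₂, mul_one]
  have hfin : ∀ R : ℝ, 0 ≤ R → log W * (∫ y in (-R)..R, heatKernel u₂ y) ≤
      (∫ y in (-R)..R, (q * f y + A * y ^ 2 + B) * heatKernel u₂ y) +
        a * (2 * √((∫ x, x ^ 2 * ρ x) * (heatKernel u₂ R ^ 2 / heatKernel u₂ (R + 1)))) := by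
    intro R hR
    have hdc : Continuous fun y => (a * dT y - y / (2 * u₁) * T y) * heatKernel u₂ y := by
      fun_prop
    have h1 := intervalIntegral.integral_eq_sub_of_hasDerivAt (fun y _ => hflux y)
      (hdc.intervalIntegrable (-R) R)
    have h2 := mul_le_mul_of_nonneg_left
      (transport_flux_le hu₂ (fun x => (hρ0 x).le) hρi hρ1 hρ2 hT hR) ha0.le
    have h3 : log W * (∫ y in (-R)..R, heatKernel u₂ y) ≤
        ∫ y in (-R)..R, ((q * f y + A * y ^ 2 + B) * heatKernel u₂ y +
          (a * dT y - y / (2 * u₁) * T y) * heatKernel u₂ y) := by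
      rw [← intervalIntegral.integral_const_mul]
      refine intervalIntegral.integral_mono_on (by linarith)
        ((hk₂c.const_mul _).intervalIntegrable _ _)
        (Continuous.intervalIntegrable (by fun_prop) _ _) fun y _ => ?_
      rw [← add_mul]
      exact mul_le_mul_of_nonneg_right (hpt y) (heatKernel_pos hu₂ y).le
    rw [intervalIntegral.integral_add hgi.intervalIntegrable (hdc.intervalIntegrable _ _), h1] at h3
    linarith
  have hlim : log W ≤ q * (∫ y, f y * heatKernel u₂ y) + A * (2 * u₂) + B := by
    have t1 := (intervalIntegral_tendsto_integral hk₂ Filter.tendsto_neg_atTop_atBot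
      Filter.tendsto_id).const_mul (log W)
    have t2 := (intervalIntegral_tendsto_integral hgi Filter.tendsto_neg_atTop_atBot
      Filter.tendsto_id).add
      (((tendsto_sqrt_heatKernel_sq_div hu₂ (∫ x, x ^ 2 * ρ x)).const_mul 2).const_mul a)
    rw [integral_heatKernel hu₂, mul_one] at t1
    rw [hg, mul_zero, mul_zero, add_zero] at t2
    exact le_of_tendsto_of_tendsto t1 t2
      ((Filter.eventually_ge_atTop 0).mono hfin)
  rw [← log_le_iff_le_exp hW]
  refine hlim.trans_eq ?_
  have : A * (2 * u₂) = a / 2 + 1 / 2 := by rw [hA, ha]; field_simp; ring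
  rw [this, hB]
  ring

lemma integral_fin_cons {n : ℕ} {g : (Fin (n + 1) → ℝ) → ℝ} (hg : Integrable g) :
    ∫ v, g v = ∫ v : Fin n → ℝ, ∫ t : ℝ, g (Fin.cons t v) := by
  have hmp := (volume_preserving_piFinSuccAbove (fun _ : Fin (n + 1) => ℝ) 0).symm
  have hcomp : ∀ z, (MeasurableEquiv.piFinSuccAbove (fun _ : Fin (n + 1) => ℝ) 0).symm z =
      Fin.cons z.1 z.2 := fun z => by
    simp [MeasurableEquiv.piFinSuccAbove_symm_apply, Fin.insertNthEquiv]
  have hi := (hmp.integrable_comp_emb (MeasurableEquiv.measurableEmbedding _)).mpr hg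
  rw [← hmp.integral_comp' g]
  simp only [Function.comp_def, hcomp] at hi ⊢
  exact integral_prod_symm _ hi

lemma dist_fin_cons_left {n : ℕ} (s t : ℝ) (v : Fin n → ℝ) :
    dist (Fin.cons s v : Fin (n + 1) → ℝ) (Fin.cons t v) ≤ dist s t := by
  refine (dist_pi_le_iff dist_nonneg).mpr fun i => ?_
  cases i using Fin.cases <;> simp

lemma dist_fin_cons_right {n : ℕ} (t : ℝ) (v w : Fin n → ℝ) :
    dist (Fin.cons t v : Fin (n + 1) → ℝ) (Fin.cons t w) ≤ dist v w := by
  refine (dist_pi_le_iff dist_nonneg).mpr fun i => ?_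
  cases i using Fin.cases with
  | zero => simp
  | succ i => simpa using dist_le_pi_dist v w i

/-- Tensorization of the infimal-convolution inequality for product densities. -/
lemma integral_exp_infConv_pi_le {w₁ w₂ : ℝ → ℝ} (h₁0 : ∀ t, 0 ≤ w₁ t) (h₂0 : ∀ t, 0 ≤ w₂ t)
    (h₁i : Integrable w₁) (h₂i : Integrable w₂)
    (h₂1 : ∫ t, w₂ t = 1) {q κ : ℝ} (hq : 0 < q)
    (hone : ∀ (f : ℝ → ℝ) (L : NNReal) (C : ℝ), LipschitzWith L f → (∀ x, |f x| ≤ C) →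
      ∫ t, exp (q * infConv (fun t => t ^ 2 / 2) f t) * w₁ t ≤
        exp (q * (∫ t, f t * w₂ t) + κ))
    (n : ℕ) (f : (Fin n → ℝ) → ℝ) (L : NNReal) (C : ℝ) (hL : LipschitzWith L f)
    (hC : ∀ x, |f x| ≤ C) :
    ∫ v, exp (q * infConv (fun v : Fin n → ℝ => (∑ i, v i ^ 2) / 2) f v) * ∏ i, w₁ (v i) ≤
      exp (q * (∫ v, f v * ∏ i, w₂ (v i)) + n * κ) := by
  have hcost : ∀ (m : ℕ) (v : Fin m → ℝ), 0 ≤ (∑ i, v i ^ 2) / 2 := fun m v => by positivity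
  have integrable_expQ : ∀ {m : ℕ} {g : (Fin m → ℝ) → ℝ} {K : NNReal}, LipschitzWith K g →
      (∀ x, |g x| ≤ C) → Integrable fun v : Fin m → ℝ =>
        exp (q * infConv (fun v : Fin m → ℝ => (∑ i, v i ^ 2) / 2) g v) * ∏ i, w₁ (v i) := by
    intro m g K hg hgC
    refine (Integrable.fintype_prod fun _ => h₁i).bdd_mul (c := exp (q * C))
      (Continuous.aestronglyMeasurable ?_) (Filter.Eventually.of_forall fun v => ?_)
    · have := (lipschitzWith_infConv (hcost m) hgC hg).continuous
      fun_prop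
    · rw [Real.norm_eq_abs, Real.abs_exp]
      exact exp_le_exp.mpr (mul_le_mul_of_nonneg_left
        (le_of_abs_le (abs_infConv_le (hcost m) (by simp) hgC v)) hq.le)
  induction n generalizing L with
  | zero =>
    have hQ : ∀ v, infConv (fun v : Fin 0 → ℝ => (∑ i, v i ^ 2) / 2) f v = f v := fun v => by
      rw [infConv, ciInf_unique, Finset.univ_eq_empty, Finset.sum_empty, zero_div, add_zero]
      exact congrArg f (Subsingleton.elim _ _)
    have hvol : volume.real (Set.univ : Set (Fin 0 → ℝ)) = 1 := by
      simp [measureReal_def, volume_pi]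
    simp_rw [hQ]
    rw [integral_unique, integral_unique, hvol]
    simp only [one_smul, Finset.univ_eq_empty, Finset.prod_empty, mul_one, Nat.cast_zero, zero_mul,
      add_zero, le_refl]
  | succ n ih =>
    have hfib : ∀ v : Fin n → ℝ, LipschitzWith L fun t : ℝ => f (Fin.cons t v) := fun v =>
      LipschitzWith.of_dist_le_mul fun s t => (hL.dist_le_mul _ _).trans
        (mul_le_mul_of_nonneg_left (dist_fin_cons_left s t v) L.2)
    have hfi : ∀ v : Fin n → ℝ, Integrable fun t : ℝ => f (Fin.cons t v) * w₂ t := fun v =>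
      h₂i.bdd_mul (hfib v).continuous.aestronglyMeasurable
        (Filter.Eventually.of_forall fun t => hC _)
    set g : (Fin n → ℝ) → ℝ := fun v => ∫ t, f (Fin.cons t v) * w₂ t with hg
    have hgL : LipschitzWith L g := by
      refine LipschitzWith.of_le_add_mul L fun v w => ?_
      have h : g w + L * dist v w = ∫ t, (f (Fin.cons t w) * w₂ t + L * dist v w * w₂ t) := by
        rw [integral_add (hfi w) (h₂i.const_mul _), integral_const_mul, h₂1, mul_one]
      rw [h]
      refine integral_mono (hfi v) ((hfi w).add (h₂i.const_mul _)) fun t => ?_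
      have h1 := hL.le_add_mul (Fin.cons t v) (Fin.cons t w)
      have h2 := mul_le_mul_of_nonneg_left (dist_fin_cons_right t v w) L.2
      have h3 := mul_le_mul_of_nonneg_right (h1.trans (add_le_add_right h2 _)) (h₂0 t)
      dsimp only
      rw [← add_mul]
      exact h3
    have hgC : ∀ v, |g v| ≤ C := by
      intro v
      have h := norm_integral_le_of_norm_le (h₂i.const_mul C)
        (f := fun t => f (Fin.cons t v) * w₂ t) (Filter.Eventually.of_forall fun t => by
          rw [norm_mul, Real.norm_of_nonneg (h₂0 t)]
          exact mul_le_mul_of_nonneg_right (hC _) (h₂0 t))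
      rwa [integral_const_mul, h₂1, mul_one] at h
    have hinner : ∀ v : Fin n → ℝ,
        ∫ t, exp (q * infConv (fun v : Fin (n + 1) → ℝ => (∑ i, v i ^ 2) / 2) f (Fin.cons t v)) *
          w₁ t ≤ exp (q * infConv (fun v : Fin n → ℝ => (∑ i, v i ^ 2) / 2) g v) * exp κ := by
      intro v
      set I := ∫ t, exp (q * infConv (fun v : Fin (n + 1) → ℝ => (∑ i, v i ^ 2) / 2) f
        (Fin.cons t v)) * w₁ t with hI
      have hbd : ∀ w : Fin n → ℝ,
          I ≤ exp (q * (g w + (∑ i, (v - w) i ^ 2) / 2) + κ) := by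
        intro w
        have hQ : ∀ t, infConv (fun v : Fin (n + 1) → ℝ => (∑ i, v i ^ 2) / 2) f (Fin.cons t v) ≤
            infConv (fun t => t ^ 2 / 2) (fun s => f (Fin.cons s w)) t +
              (∑ i, (v - w) i ^ 2) / 2 := by
          intro t
          rw [← sub_le_iff_le_add]
          refine le_ciInf fun s => ?_
          have := infConv_le (hcost (n + 1)) hC (Fin.cons t v) (Fin.cons s w)
          simp only [Pi.sub_apply, Fin.sum_univ_succ, Fin.cons_zero, Fin.cons_succ] at this ⊢
          linarith
        have hq1 : ∀ t : ℝ, 0 ≤ t ^ 2 / 2 := fun t => by positivity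
        have hone' := hone _ L C (hfib w) fun t => hC _
        rw [mul_add, add_right_comm, exp_add]
        refine le_trans ?_ (mul_le_mul_of_nonneg_right hone' (exp_pos _).le)
        rw [← integral_mul_const]
        refine integral_mono_of_nonneg (Filter.Eventually.of_forall fun t =>
          mul_nonneg (exp_pos _).le (h₁0 t)) ?_ (Filter.Eventually.of_forall fun t => ?_)
        · refine Integrable.mul_const (h₁i.bdd_mul (c := exp (q * C))
            (Continuous.aestronglyMeasurable ?_) (Filter.Eventually.of_forall fun t => ?_)) _
          · have := (lipschitzWith_infConv hq1 (fun t => hC (Fin.cons t w)) (hfib w)).continuous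
            fun_prop
          · rw [Real.norm_eq_abs, Real.abs_exp]
            exact exp_le_exp.mpr (mul_le_mul_of_nonneg_left
              (le_of_abs_le (abs_infConv_le hq1 (by simp) (fun t => hC (Fin.cons t w)) t)) hq.le)
        · dsimp only
          rw [mul_right_comm, ← exp_add, ← mul_add]
          exact mul_le_mul_of_nonneg_right
            (exp_le_exp.mpr (mul_le_mul_of_nonneg_left (hQ t) hq.le)) (h₁0 t)
      rw [← exp_add]
      rcases le_or_gt I 0 with hI0 | hI0
      · exact hI0.trans (exp_pos _).le
      rw [← log_le_iff_le_exp hI0, ← sub_le_iff_le_add, ← div_le_iff₀' hq]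
      refine le_ciInf fun w => ?_
      rw [div_le_iff₀' hq, sub_le_iff_le_add, log_le_iff_le_exp hI0]
      exact hbd w
    calc ∫ v, exp (q * infConv (fun v : Fin (n + 1) → ℝ => (∑ i, v i ^ 2) / 2) f v) *
          ∏ i, w₁ (v i)
        = ∫ v : Fin n → ℝ, (∫ t, exp (q * infConv (fun v : Fin (n + 1) → ℝ =>
            (∑ i, v i ^ 2) / 2) f (Fin.cons t v)) * w₁ t) * ∏ i, w₁ (v i) := by
          rw [integral_fin_cons (integrable_expQ hL hC)]
          simp_rw [Fin.prod_univ_succ, Fin.cons_zero, Fin.cons_succ, ← mul_assoc,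
            integral_mul_const]
      _ ≤ ∫ v : Fin n → ℝ, exp κ * (exp (q * infConv (fun v : Fin n → ℝ =>
            (∑ i, v i ^ 2) / 2) g v) * ∏ i, w₁ (v i)) := by
          refine integral_mono_of_nonneg (Filter.Eventually.of_forall fun v =>
            mul_nonneg (integral_nonneg fun t => mul_nonneg (exp_pos _).le (h₁0 t))
              (Finset.prod_nonneg fun i _ => h₁0 _)) ((integrable_expQ hgL hgC).const_mul _)
            (Filter.Eventually.of_forall fun v => ?_)
          dsimp only
          rw [← mul_assoc, mul_comm (exp κ)]
          exact mul_le_mul_of_nonneg_right (hinner v) (Finset.prod_nonneg fun i _ => h₁0 _)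
      _ ≤ exp κ * exp (q * (∫ v, g v * ∏ i, w₂ (v i)) + n * κ) := by
          rw [integral_const_mul]
          exact mul_le_mul_of_nonneg_left (ih g L hgL hgC) (exp_pos _).le
      _ = exp (q * (∫ v, f v * ∏ i, w₂ (v i)) + (n + 1 : ℕ) * κ) := by
          have hi : Integrable fun v : Fin (n + 1) → ℝ => f v * ∏ i, w₂ (v i) :=
            (Integrable.fintype_prod fun _ => h₂i).bdd_mul hL.continuous.aestronglyMeasurable
              (Filter.Eventually.of_forall hC)
          rw [integral_fin_cons hi]
          simp_rw [Fin.prod_univ_succ, Fin.cons_zero, Fin.cons_succ, ← mul_assoc,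
            integral_mul_const]
          rw [← exp_add]
          congr 1
          push_cast
          ring

lemma prod_heatKernel {n : ℕ} {u : ℝ} (hu : 0 < u) (v : Fin n → ℝ) :
    ∏ i, heatKernel u (v i) =
      (4 * π * u) ^ (-(n : ℝ) / 2) * exp (-(∑ i, v i ^ 2) / (4 * u)) := by
  simp only [heatKernel]
  rw [Finset.prod_mul_distrib, Finset.prod_const, Finset.card_univ, Fintype.card_fin, ← exp_sum,
    ← Finset.sum_div, Finset.sum_neg_distrib, Real.sqrt_eq_rpow, ← Real.rpow_neg (by positivity),
    ← Real.rpow_natCast, ← Real.rpow_mul (by positivity)]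
  congr 2
  ring

lemma heat_eq_integral_prod_heatKernel {n : ℕ} {u : ℝ} (hu : 0 < u)
    (f : EuclideanSpace ℝ (Fin n) → ℝ) (x : EuclideanSpace ℝ (Fin n)) :
    heat n u f x = ∫ v : Fin n → ℝ, f (x - WithLp.toLp 2 v) * ∏ i, heatKernel u (v i) := by
  rw [heat, if_neg hu.ne', ← integral_const_mul, ← integral_sub_left_eq_self _ volume x,
    ← (PiLp.volume_preserving_toLp (Fin n)).integral_comp
      (MeasurableEquiv.toLp 2 _).measurableEmbedding]
  refine integral_congr_ae (Filter.Eventually.of_forall fun v => ?_)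
  dsimp only
  rw [prod_heatKernel hu, sub_sub_cancel, EuclideanSpace.real_norm_sq_eq]
  ring

lemma hopfLax_one_sub_toLp {n : ℕ} (f : EuclideanSpace ℝ (Fin n) → ℝ)
    (x : EuclideanSpace ℝ (Fin n)) (v : Fin n → ℝ) :
    hopfLax n 1 f (x - WithLp.toLp 2 v) =
      infConv (fun v : Fin n → ℝ => (∑ i, v i ^ 2) / 2) (fun w => f (x - WithLp.toLp 2 w)) v := by
  rw [hopfLax, infConv]
  refine (Equiv.iInf_congr ((WithLp.equiv 2 (Fin n → ℝ)).symm.trans (Equiv.subLeft x))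
    fun w => ?_).symm
  simp only [Equiv.trans_apply, WithLp.equiv_symm_apply, Equiv.subLeft_apply,
    sub_sub_sub_cancel_left, EuclideanSpace.real_norm_sq_eq, mul_one]
  congr 2
  refine Finset.sum_congr rfl fun i _ => ?_
  simp
  ring

theorem dimensional_local_transport_exponential_form (n : ℕ) (hn : 1 ≤ n)
    (u₁ u₂ : ℝ) (hu₁ : 0 < u₁) (hu₂ : 0 < u₂)
    (f : EuclideanSpace ℝ (Fin n) → ℝ) (L : NNReal) (hLip : LipschitzWith L f)
    (C : ℝ) (hbd : ∀ x, |f x| ≤ C)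
    (x : EuclideanSpace ℝ (Fin n)) :
    heat n u₁ (fun y => Real.exp ((1 / (2 * u₁)) * hopfLax n 1 f y)) x ≤
      Real.exp ((1 / (2 * u₁)) * heat n u₂ f x) *
        Real.exp ((n / 2) * (u₂ / u₁ - 1 - Real.log (u₂ / u₁))) := by
  have hLip' := hLip.comp ((IsometryEquiv.subLeft x).isometry.lipschitz.comp
    (PiLp.lipschitzWith_toLp 2 fun _ : Fin n => ℝ))
  have h := integral_exp_infConv_pi_le (fun t => (heatKernel_pos hu₁ t).le)
    (fun t => (heatKernel_pos hu₂ t).le) (integrable_heatKernel hu₁) (integrable_heatKernel hu₂)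
    (integral_heatKernel hu₂) (q := 1 / (2 * u₁)) (by positivity)
    (fun g K D hg hD => integral_exp_infConv_mul_heatKernel_le hu₁ hu₂ hg hD)
    n (fun w => f (x - WithLp.toLp 2 w)) _ C hLip' fun w => hbd _
  rw [heat_eq_integral_prod_heatKernel hu₁, heat_eq_integral_prod_heatKernel hu₂, ← exp_add]
  simp_rw [hopfLax_one_sub_toLp]
  refine h.trans_eq ?_
  ring_nf
end

section
/- Let n ≥ 1 and let f : ℝ^n → ℝ be a smooth compactly supported function. Then ∫ f² dγ − ( ∫ f dγ )² ≤ ∫ |∇f|² dγ − (1/(2n)) · ( ∫ Δf dγ )² (refined dimensional Poincaré inequality for the standard Gaussian measure). -/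
open MeasureTheory Real

noncomputable def gaussianMeasure (n : ℕ) : Measure (EuclideanSpace ℝ (Fin n)) :=
  volume.withDensity fun x => ENNReal.ofReal ((2 * π) ^ (-(n : ℝ) / 2) * Real.exp (-‖x‖ ^ 2 / 2))

/-- Laplacian on `ℝ^n` as the sum of second derivatives in the coordinate directions. -/
noncomputable def laplacian (n : ℕ) (f : EuclideanSpace ℝ (Fin n) → ℝ)
    (x : EuclideanSpace ℝ (Fin n)) : ℝ :=
  ∑ i : Fin n,
    fderiv ℝ (fderiv ℝ f) x (EuclideanSpace.single i 1) (EuclideanSpace.single i 1)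

section GaussianPoincare

open ProbabilityTheory
open scoped RealInnerProductSpace

/-- The density of the standard Gaussian measure with respect to Lebesgue measure. -/
noncomputable def gaussianDensity (n : ℕ) (x : EuclideanSpace ℝ (Fin n)) : ℝ :=
  (2 * π) ^ (-(n : ℝ) / 2) * Real.exp (-‖x‖ ^ 2 / 2)

lemma gaussianDensity_nonneg (n : ℕ) (x : EuclideanSpace ℝ (Fin n)) : 0 ≤ gaussianDensity n x := by
  unfold gaussianDensity; positivity

lemma measurable_gaussianDensity (n : ℕ) : Measurable (gaussianDensity n) := by
  unfold gaussianDensity; fun_prop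

lemma integrable_gaussianMeasure_iff {n : ℕ} {g : EuclideanSpace ℝ (Fin n) → ℝ} :
    Integrable g (gaussianMeasure n) ↔ Integrable (fun x => gaussianDensity n x * g x) := by
  unfold gaussianMeasure
  change Integrable g (volume.withDensity fun x => ENNReal.ofReal (gaussianDensity n x)) ↔ _
  rw [integrable_withDensity_iff_integrable_smul' (measurable_gaussianDensity n).ennreal_ofReal
    (by simp)]
  simp [ENNReal.toReal_ofReal (gaussianDensity_nonneg n _)]

lemma integral_gaussianMeasure {F : Type*} [NormedAddCommGroup F] [NormedSpace ℝ F] {n : ℕ}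
    (g : EuclideanSpace ℝ (Fin n) → F) :
    ∫ x, g x ∂(gaussianMeasure n) = ∫ x, gaussianDensity n x • g x := by
  unfold gaussianMeasure
  change ∫ x, g x ∂(volume.withDensity fun x => ENNReal.ofReal (gaussianDensity n x)) = _
  rw [integral_withDensity_eq_integral_toReal_smul (measurable_gaussianDensity n).ennreal_ofReal
    (by simp)]
  simp [ENNReal.toReal_ofReal (gaussianDensity_nonneg n _)]

lemma integrable_gaussianDensity (n : ℕ) : Integrable (gaussianDensity n) := by
  have h := (GaussianFourier.integrable_cexp_neg_mul_sq_norm_add (b := 1 / 2) (by norm_num) 0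
    (0 : EuclideanSpace ℝ (Fin n))).norm
  refine (h.const_mul ((2 * π) ^ (-(n : ℝ) / 2))).congr (.of_forall fun x => ?_)
  simp only [gaussianDensity, Complex.norm_exp]
  congr 2
  simp [← Complex.ofReal_pow]
  ring

lemma gaussianMeasure_eq_stdGaussian (n : ℕ) :
    gaussianMeasure n = stdGaussian (EuclideanSpace ℝ (Fin n)) := by
  have : IsFiniteMeasure (gaussianMeasure n) :=
    isFiniteMeasure_withDensity_ofReal (integrable_gaussianDensity n).2
  refine Measure.ext_of_charFun ?_
  ext t
  rw [charFun_stdGaussian, charFun_apply, integral_gaussianMeasure]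
  have h := GaussianFourier.integral_cexp_neg_mul_sq_norm_add (b := 1 / 2) (by norm_num)
    Complex.I t
  have hpos : (0 : ℝ) < 2 * π := by positivity
  calc _ = ∫ x : EuclideanSpace ℝ (Fin n), (((2 * π) ^ (-(n : ℝ) / 2) : ℝ) : ℂ) *
        Complex.exp (-(1 / 2) * ‖x‖ ^ 2 + Complex.I * ⟪t, x⟫) := by
        congr 1 with x
        rw [gaussianDensity, Complex.exp_add, real_inner_comm t x, mul_comm Complex.I]
        simp only [Complex.real_smul]
        push_cast
        ring_nf
    _ = _ := by
        rw [integral_const_mul, h, ← mul_assoc]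
        have h1 : ((π : ℂ) / (1 / 2)) ^
            ((Module.finrank ℝ (EuclideanSpace ℝ (Fin n)) : ℂ) / 2) =
            (((2 * π) ^ ((n : ℝ) / 2) : ℝ) : ℂ) := by
          rw [Complex.ofReal_cpow hpos.le]
          simp
          ring_nf
        rw [h1, ← Complex.ofReal_mul, ← Real.rpow_add hpos]
        simp only [Complex.I_sq]
        ring_nf
        simp

instance isGaussian_gaussianMeasure (n : ℕ) : IsGaussian (gaussianMeasure n) := by
  rw [gaussianMeasure_eq_stdGaussian]; infer_instance

lemma hasFDerivAt_gaussianDensity (n : ℕ) (x : EuclideanSpace ℝ (Fin n)) :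
    HasFDerivAt (gaussianDensity n) (-gaussianDensity n x • innerSL ℝ x) x := by
  have h := (((hasStrictFDerivAt_norm_sq x).hasFDerivAt.const_mul (-1 / 2)).exp.const_mul
    ((2 * π) ^ (-(n : ℝ) / 2)))
  have heq : gaussianDensity n =
      fun y => (2 * π) ^ (-(n : ℝ) / 2) * Real.exp (-1 / 2 * ‖y‖ ^ 2) := by
    ext y
    rw [gaussianDensity]
    ring_nf
  rw [heq]
  refine h.congr_fderiv ?_
  ext v
  simp
  ring

/-- Gaussian integration by parts. -/
lemma integral_fderiv_gaussianMeasure {n : ℕ} {g : EuclideanSpace ℝ (Fin n) → ℝ}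
    (hg : Differentiable ℝ g) (v : EuclideanSpace ℝ (Fin n))
    (hint : Integrable g (gaussianMeasure n))
    (hint_fderiv : Integrable (fun x => fderiv ℝ g x v) (gaussianMeasure n))
    (hint_mul : Integrable (fun x => g x * ⟪x, v⟫) (gaussianMeasure n)) :
    ∫ x, fderiv ℝ g x v ∂(gaussianMeasure n) = ∫ x, g x * ⟪x, v⟫ ∂(gaussianMeasure n) := by
  have hD : ∀ x, fderiv ℝ (gaussianDensity n) x v * g x =
      -(gaussianDensity n x * (g x * ⟪x, v⟫)) := fun x => by
    rw [(hasFDerivAt_gaussianDensity n x).fderiv]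
    simp
    ring
  rw [integral_gaussianMeasure, integral_gaussianMeasure]
  simp only [smul_eq_mul]
  rw [integral_mul_fderiv_eq_neg_fderiv_mul_of_integrable]
  · simp_rw [hD, integral_neg, neg_neg]
  · simp_rw [hD]
    exact (integrable_gaussianMeasure_iff.1 hint_mul).neg
  · exact integrable_gaussianMeasure_iff.1 hint_fderiv
  · exact integrable_gaussianMeasure_iff.1 hint
  · exact fun x _ => (hasFDerivAt_gaussianDensity n x).differentiableAt
  · exact fun x _ => hg x

lemma memLp_two_id_gaussianMeasure (n : ℕ) :
    MemLp (fun x : EuclideanSpace ℝ (Fin n) => x) 2 (gaussianMeasure n) :=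
  IsGaussian.memLp_two_id

lemma memLp_inner_gaussianMeasure {n : ℕ} (v : EuclideanSpace ℝ (Fin n)) :
    MemLp (fun x => ⟪x, v⟫) 2 (gaussianMeasure n) :=
  (memLp_two_id_gaussianMeasure n).inner_const v

lemma integral_norm_sq_gaussianMeasure (n : ℕ) :
    ∫ x, ‖x‖ ^ 2 ∂(gaussianMeasure n) = n := by
  have hsq : ∀ v : EuclideanSpace ℝ (Fin n),
      Integrable (fun x => ⟪x, v⟫ * ⟪x, v⟫) (gaussianMeasure n) := fun v =>
    (memLp_inner_gaussianMeasure v).integrable_mul (memLp_inner_gaussianMeasure v)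
  have hv : ∀ v : EuclideanSpace ℝ (Fin n),
      ∫ x, ⟪x, v⟫ * ⟪x, v⟫ ∂(gaussianMeasure n) = ‖v‖ ^ 2 := fun v => by
    have hdiff : Differentiable ℝ fun y : EuclideanSpace ℝ (Fin n) => ⟪y, v⟫ :=
      differentiable_id.inner ℝ (differentiable_const v)
    have hD : ∀ x, fderiv ℝ (fun y => ⟪y, v⟫) x v = ‖v‖ ^ 2 := fun x => by
      rw [fderiv_inner_apply ℝ (by fun_prop) (by fun_prop)]
      simp
    rw [← integral_fderiv_gaussianMeasure hdiff v
      ((memLp_inner_gaussianMeasure v).integrable (by norm_num)) (by simp [hD]) (hsq v)]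
    simp [hD]
  have hsum : ∀ x : EuclideanSpace ℝ (Fin n), ‖x‖ ^ 2 =
      ∑ i, ⟪x, EuclideanSpace.single i 1⟫ * ⟪x, EuclideanSpace.single i 1⟫ := fun x => by
    rw [EuclideanSpace.real_norm_sq_eq]
    simp [pow_two, EuclideanSpace.inner_single_right]
  simp_rw [hsum]
  rw [integral_finsetSum _ fun i _ => hsq _]
  simp [hv]

lemma integral_id_gaussianMeasure (n : ℕ) : ∫ x, x ∂(gaussianMeasure n) = 0 := by
  rw [gaussianMeasure_eq_stdGaussian, integral_id_stdGaussian]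

/-- Rotations preserve the product of two standard Gaussian measures. -/
lemma measurePreserving_rotation (n : ℕ) (θ : ℝ) :
    MeasurePreserving (ContinuousLinearMap.rotation θ)
      ((gaussianMeasure n).prod (gaussianMeasure n))
      ((gaussianMeasure n).prod (gaussianMeasure n)) :=
  ⟨(ContinuousLinearMap.rotation θ).continuous.measurable,
    IsGaussian.map_rotation_eq_self (integral_id_gaussianMeasure n) θ⟩

lemma measurePreserving_cos_sub_sin (n : ℕ) (θ : ℝ) :
    MeasurePreserving (fun p : EuclideanSpace ℝ (Fin n) × EuclideanSpace ℝ (Fin n) =>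
      cos θ • p.1 - sin θ • p.2)
      ((gaussianMeasure n).prod (gaussianMeasure n)) (gaussianMeasure n) := by
  convert measurePreserving_fst.comp (measurePreserving_rotation n (-θ)) using 2 with p
  simp [ContinuousLinearMap.rotation_apply, sub_eq_add_neg]

lemma cos_sub_sin_rotation {E : Type*} [NormedAddCommGroup E] [NormedSpace ℝ E] (θ : ℝ)
    (p : E × E) :
    cos θ • (ContinuousLinearMap.rotation θ p).1 - sin θ • (ContinuousLinearMap.rotation θ p).2 =
      p.1 := by
  have h := sin_sq_add_cos_sq θ
  simp only [ContinuousLinearMap.rotation_apply]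
  have h1 : cos θ • (cos θ • p.1 + sin θ • p.2) - sin θ • (-sin θ • p.1 + cos θ • p.2) =
      (sin θ ^ 2 + cos θ ^ 2) • p.1 := by module
  rw [h1, h, one_smul]

lemma MeasureTheory.MeasurePreserving.integral_comp_of_aestronglyMeasurable
    {α β F : Type*} [MeasurableSpace α] [MeasurableSpace β] [NormedAddCommGroup F]
    [NormedSpace ℝ F] {μ : Measure α} {ν : Measure β} {φ : α → β} (hφ : MeasurePreserving φ μ ν)
    {g : β → F} (hg : AEStronglyMeasurable g ν) :
    ∫ x, g (φ x) ∂μ = ∫ y, g y ∂ν := by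
  rw [← hφ.map_eq, integral_map hφ.measurable.aemeasurable (by rwa [hφ.map_eq])]

lemma MeasureTheory.MemLp.integrable_real_inner {α E : Type*} [MeasurableSpace α]
    [NormedAddCommGroup E] [InnerProductSpace ℝ E] {μ : Measure α} {U V : α → E}
    (hU : MemLp U 2 μ) (hV : MemLp V 2 μ) : Integrable (fun x => ⟪U x, V x⟫) μ :=
  (hU.norm.integrable_mul hV.norm).mono' (hU.1.inner hV.1)
    (.of_forall fun x => norm_inner_le_norm (U x) (V x))

section Correlation

variable {n : ℕ} {K : EuclideanSpace ℝ (Fin n) → EuclideanSpace ℝ (Fin n)}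

lemma memLp_fst (hK : MemLp K 2 (gaussianMeasure n)) :
    MemLp (fun p : EuclideanSpace ℝ (Fin n) × EuclideanSpace ℝ (Fin n) => K p.1) 2
      ((gaussianMeasure n).prod (gaussianMeasure n)) :=
  hK.comp_measurePreserving measurePreserving_fst

lemma memLp_snd (hK : MemLp K 2 (gaussianMeasure n)) :
    MemLp (fun p : EuclideanSpace ℝ (Fin n) × EuclideanSpace ℝ (Fin n) => K p.2) 2
      ((gaussianMeasure n).prod (gaussianMeasure n)) :=
  hK.comp_measurePreserving measurePreserving_snd

lemma memLp_cos_sub_sin (hK : MemLp K 2 (gaussianMeasure n)) (θ : ℝ) :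
    MemLp (fun p : EuclideanSpace ℝ (Fin n) × EuclideanSpace ℝ (Fin n) =>
      K (cos θ • p.1 - sin θ • p.2)) 2 ((gaussianMeasure n).prod (gaussianMeasure n)) :=
  hK.comp_measurePreserving (measurePreserving_cos_sub_sin n θ)

lemma integral_inner_fst_combination (hK : MemLp K 2 (gaussianMeasure n)) (a b : ℝ) :
    ∫ p, ⟪K p.1, a • p.1 + b • p.2⟫ ∂((gaussianMeasure n).prod (gaussianMeasure n)) =
      a * ∫ x, ⟪K x, x⟫ ∂(gaussianMeasure n) := by
  have hid := memLp_two_id_gaussianMeasure n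
  have h1 := (memLp_fst hK).integrable_real_inner (memLp_fst hid)
  have h2 := (memLp_fst hK).integrable_real_inner (memLp_snd hid)
  simp_rw [inner_add_right, real_inner_smul_right]
  rw [integral_add (h1.const_mul a) (h2.const_mul b), integral_const_mul, integral_const_mul,
    integral_prod _ h2,
    measurePreserving_fst.integral_comp_of_aestronglyMeasurable
      (hK.integrable_real_inner hid).aestronglyMeasurable]
  have h3 : ∀ x, ∫ y, ⟪K x, y⟫ ∂(gaussianMeasure n) = 0 := fun x => by
    rw [integral_inner (hid.integrable (by norm_num)), integral_id_gaussianMeasure,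
      inner_zero_right]
  simp [h3]

lemma integral_inner_cos_sub_sin_fst (hK : MemLp K 2 (gaussianMeasure n)) (θ : ℝ) :
    ∫ p, ⟪K (cos θ • p.1 - sin θ • p.2), p.1⟫ ∂((gaussianMeasure n).prod (gaussianMeasure n)) =
      cos θ * ∫ x, ⟪K x, x⟫ ∂(gaussianMeasure n) := by
  have hid := memLp_two_id_gaussianMeasure n
  rw [← (measurePreserving_rotation n θ).integral_comp_of_aestronglyMeasurable
    ((memLp_cos_sub_sin hK θ).integrable_real_inner (memLp_fst hid)).aestronglyMeasurable]
  simp_rw [cos_sub_sin_rotation]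
  exact integral_inner_fst_combination hK (cos θ) (sin θ)

lemma integral_inner_cos_sub_sin_le (hK : MemLp K 2 (gaussianMeasure n)) (θ : ℝ) :
    ∫ p, ⟪K (cos θ • p.1 - sin θ • p.2), K p.1⟫
      ∂((gaussianMeasure n).prod (gaussianMeasure n)) ≤ ∫ x, ‖K x‖ ^ 2 ∂(gaussianMeasure n) := by
  have hsq := hK.integrable_norm_pow (by norm_num : (2 : ℕ) ≠ 0)
  have hP := (memLp_cos_sub_sin hK θ).integrable_norm_pow (by norm_num : (2 : ℕ) ≠ 0)
  have h1 := (memLp_fst hK).integrable_norm_pow (by norm_num : (2 : ℕ) ≠ 0)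
  calc _ ≤ ∫ p : EuclideanSpace ℝ (Fin n) × EuclideanSpace ℝ (Fin n),
          (1 / 2) * (‖K (cos θ • p.1 - sin θ • p.2)‖ ^ 2 + ‖K p.1‖ ^ 2)
          ∂((gaussianMeasure n).prod (gaussianMeasure n)) := by
        refine integral_mono ((memLp_cos_sub_sin hK θ).integrable_real_inner (memLp_fst hK))
          ((hP.add h1).const_mul _) fun p => ?_
        have := real_inner_le_norm (K (cos θ • p.1 - sin θ • p.2)) (K p.1)
        simp only
        nlinarith [sq_nonneg (‖K (cos θ • p.1 - sin θ • p.2)‖ - ‖K p.1‖)]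
    _ = _ := by
        rw [integral_const_mul, integral_add hP h1,
          (measurePreserving_cos_sub_sin n θ).integral_comp_of_aestronglyMeasurable
            hsq.aestronglyMeasurable,
          measurePreserving_fst.integral_comp_of_aestronglyMeasurable
            hsq.aestronglyMeasurable]
        ring

/-- The correlation of a vector field along the Gaussian rotation, with the gain coming from its
component along the identity field. -/
lemma integral_inner_cos_sub_sin_le_sub (hn : 1 ≤ n) (hK : MemLp K 2 (gaussianMeasure n))
    (θ : ℝ) :
    ∫ p, ⟪K (cos θ • p.1 - sin θ • p.2), K p.1⟫
      ∂((gaussianMeasure n).prod (gaussianMeasure n)) ≤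
      ∫ x, ‖K x‖ ^ 2 ∂(gaussianMeasure n) -
        (1 - cos θ) * ((∫ x, ⟪K x, x⟫ ∂(gaussianMeasure n)) ^ 2 / n) := by
  have hn' : (n : ℝ) ≠ 0 := by positivity
  set A := ∫ x, ⟪K x, x⟫ ∂(gaussianMeasure n)
  set t : ℝ := A / n with ht
  have hid := memLp_two_id_gaussianMeasure n
  have hP := memLp_cos_sub_sin hK θ
  have hPid := memLp_cos_sub_sin hid θ
  have h := integral_inner_cos_sub_sin_le (hK.sub (hid.const_smul t)) θ
  simp only [Pi.sub_apply, Pi.smul_apply] at h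
  have hleft : ∫ p : EuclideanSpace ℝ (Fin n) × EuclideanSpace ℝ (Fin n),
      ⟪K (cos θ • p.1 - sin θ • p.2) - t • (cos θ • p.1 - sin θ • p.2), K p.1 - t • p.1⟫
      ∂((gaussianMeasure n).prod (gaussianMeasure n)) =
      ∫ p, ⟪K (cos θ • p.1 - sin θ • p.2), K p.1⟫
        ∂((gaussianMeasure n).prod (gaussianMeasure n)) -
        2 * t * (cos θ * A) + t ^ 2 * (cos θ * n) := by
    have e1 := integral_inner_cos_sub_sin_fst hK θ
    have e2 := integral_inner_fst_combination hK (cos θ) (-sin θ)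
    have e3 := integral_inner_cos_sub_sin_fst hid θ
    simp only [neg_smul, ← sub_eq_add_neg] at e2
    simp only [real_inner_self_eq_norm_sq, integral_norm_sq_gaussianMeasure] at e3
    have i0 := hP.integrable_real_inner (memLp_fst hK)
    have i1 := hP.integrable_real_inner (memLp_fst hid)
    have i2 := (memLp_fst hK).integrable_real_inner hPid
    have i3 := hPid.integrable_real_inner (memLp_fst hid)
    have hexpand : ∀ p : EuclideanSpace ℝ (Fin n) × EuclideanSpace ℝ (Fin n),
        ⟪K (cos θ • p.1 - sin θ • p.2) - t • (cos θ • p.1 - sin θ • p.2), K p.1 - t • p.1⟫ =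
        ⟪K (cos θ • p.1 - sin θ • p.2), K p.1⟫ -
          (t * ⟪K (cos θ • p.1 - sin θ • p.2), p.1⟫ +
            t * ⟪K p.1, cos θ • p.1 - sin θ • p.2⟫) +
          t ^ 2 * ⟪cos θ • p.1 - sin θ • p.2, p.1⟫ := fun p => by
      generalize cos θ • p.1 - sin θ • p.2 = q
      simp only [inner_sub_left, inner_sub_right, real_inner_smul_left, real_inner_smul_right]
      rw [real_inner_comm q (K p.1)]
      ring
    simp_rw [hexpand]
    have i12 := (i1.const_mul t).fun_add (i2.const_mul t)
    have i012 : Integrable (fun p : EuclideanSpace ℝ (Fin n) × EuclideanSpace ℝ (Fin n) =>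
        ⟪K (cos θ • p.1 - sin θ • p.2), K p.1⟫ -
          (t * ⟪K (cos θ • p.1 - sin θ • p.2), p.1⟫ +
            t * ⟪K p.1, cos θ • p.1 - sin θ • p.2⟫))
        ((gaussianMeasure n).prod (gaussianMeasure n)) := i0.sub i12
    rw [integral_add i012 (i3.const_mul _), integral_sub i0 i12,
      integral_add (i1.const_mul t) (i2.const_mul t), integral_const_mul, integral_const_mul,
      integral_const_mul, e1, e2, e3]
    ring
  have hright : ∫ x, ‖K x - t • x‖ ^ 2 ∂(gaussianMeasure n) =
      ∫ x, ‖K x‖ ^ 2 ∂(gaussianMeasure n) - 2 * t * A + t ^ 2 * n := by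
    have i0 := hK.integrable_norm_pow (by norm_num : (2 : ℕ) ≠ 0)
    have i1 := hK.integrable_real_inner hid
    have i2 := hid.integrable_norm_pow (by norm_num : (2 : ℕ) ≠ 0)
    have hexpand : ∀ x, ‖K x - t • x‖ ^ 2 =
        ‖K x‖ ^ 2 - 2 * t * ⟪K x, x⟫ + t ^ 2 * ‖x‖ ^ 2 := fun x => by
      simp only [norm_sub_sq_real, real_inner_smul_right, norm_smul, mul_pow, norm_eq_abs, sq_abs]
      ring
    simp_rw [hexpand]
    have i01 : Integrable (fun x => ‖K x‖ ^ 2 - 2 * t * ⟪K x, x⟫) (gaussianMeasure n) :=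
      i0.sub (i1.const_mul (2 * t))
    rw [integral_add i01 (i2.const_mul _),
      integral_sub i0 (i1.const_mul _), integral_const_mul, integral_const_mul,
      integral_norm_sq_gaussianMeasure]
  rw [hleft, hright] at h
  have hid' : A ^ 2 / n = 2 * t * A - t ^ 2 * n := by
    rw [ht]
    field_simp
    ring
  rw [hid']
  linarith

end Correlation

section Interpolation

variable {n : ℕ} {f : EuclideanSpace ℝ (Fin n) → ℝ}

lemma ContDiff.continuous_gradient {k : WithTop ℕ∞} (hf : ContDiff ℝ k f) (hk : 1 ≤ k) :
    Continuous (gradient f) :=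
  (InnerProductSpace.toDual ℝ _).symm.continuous.comp
    (hf.continuous_fderiv (fun h => by simp [h] at hk))

lemma norm_gradient (x : EuclideanSpace ℝ (Fin n)) : ‖gradient f x‖ = ‖fderiv ℝ f x‖ := by
  simp [gradient]

lemma memLp_gradient {C : ℝ} (hf : ContDiff ℝ 1 f) (hC : ∀ x, ‖fderiv ℝ f x‖ ≤ C) :
    MemLp (gradient f) 2 (gaussianMeasure n) :=
  MemLp.of_bound (hf.continuous_gradient le_rfl).aestronglyMeasurable C
    (.of_forall fun x => (norm_gradient x).trans_le (hC x))

/-- Integration by parts in the second variable of the rotated correlation. -/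
lemma integral_mul_inner_gradient_snd {C₀ C₁ : ℝ} (hf : ContDiff ℝ 1 f) (hC₀ : ∀ x, ‖f x‖ ≤ C₀)
    (hC₁ : ∀ x, ‖fderiv ℝ f x‖ ≤ C₁) (θ : ℝ) :
    ∫ p, f (cos θ • p.1 - sin θ • p.2) * ⟪p.2, gradient f p.1⟫
      ∂((gaussianMeasure n).prod (gaussianMeasure n)) =
    -sin θ * ∫ p, ⟪gradient f (cos θ • p.1 - sin θ • p.2), gradient f p.1⟫
      ∂((gaussianMeasure n).prod (gaussianMeasure n)) := by
  have hG := memLp_gradient hf hC₁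
  have hcont := hf.continuous
  have hid := memLp_two_id_gaussianMeasure n
  have hd : Differentiable ℝ f := hf.differentiable one_ne_zero
  have i1 : Integrable (fun p : EuclideanSpace ℝ (Fin n) × EuclideanSpace ℝ (Fin n) =>
      f (cos θ • p.1 - sin θ • p.2) * ⟪p.2, gradient f p.1⟫)
      ((gaussianMeasure n).prod (gaussianMeasure n)) :=
    ((memLp_snd hid).integrable_real_inner (memLp_fst hG)).bdd_mul
      (by fun_prop) (.of_forall fun p => hC₀ _)
  rw [integral_prod _ i1,
    integral_prod _ ((memLp_cos_sub_sin hG θ).integrable_real_inner (memLp_fst hG)),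
    ← integral_const_mul]
  congr 1 with x
  have hdiff : Differentiable ℝ fun y : EuclideanSpace ℝ (Fin n) =>
      f (cos θ • x - sin θ • y) := hd.comp (by fun_prop)
  have hD : ∀ y v, fderiv ℝ (fun y => f (cos θ • x - sin θ • y)) y v =
      -sin θ * ⟪gradient f (cos θ • x - sin θ • y), v⟫ := fun y v => by
    have h1 : HasFDerivAt (fun y : EuclideanSpace ℝ (Fin n) => cos θ • x - sin θ • y)
        (-(sin θ • ContinuousLinearMap.id ℝ _)) y :=
      ((hasFDerivAt_id y).const_smul (sin θ)).const_sub _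
    have h2 : HasFDerivAt (fun y => f (cos θ • x - sin θ • y)) _ y :=
      (hd (cos θ • x - sin θ • y)).hasFDerivAt.comp y h1
    rw [h2.fderiv]
    simp [inner_gradient_left]
  have hGx : Continuous fun y => gradient f (cos θ • x - sin θ • y) :=
    (hf.continuous_gradient le_rfl).comp (by fun_prop)
  rw [← integral_fderiv_gaussianMeasure hdiff (gradient f x), ← integral_const_mul]
  · simp_rw [hD]
  · exact Integrable.of_bound (by fun_prop) C₀ (.of_forall fun y => hC₀ _)
  · simp_rw [hD]
    refine (Integrable.of_bound (hGx.inner continuous_const).aestronglyMeasurable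
      (C₁ * ‖gradient f x‖)
      (.of_forall fun y => (norm_inner_le_norm _ _).trans ?_)).const_mul _
    gcongr
    exact (norm_gradient _).trans_le (hC₁ _)
  · exact ((memLp_inner_gaussianMeasure _).integrable (by norm_num)).bdd_mul
      (by fun_prop) (.of_forall fun y => hC₀ _)

lemma hasDerivAt_integral_mul_cos_add_sin {C₀ C₁ : ℝ} (hf : ContDiff ℝ 1 f)
    (hC₀ : ∀ x, ‖f x‖ ≤ C₀) (hC₁ : ∀ x, ‖fderiv ℝ f x‖ ≤ C₁) (θ : ℝ) :
    HasDerivAt (fun θ => ∫ p, f p.1 * f (cos θ • p.1 + sin θ • p.2)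
      ∂((gaussianMeasure n).prod (gaussianMeasure n)))
      (-sin θ * ∫ p, ⟪gradient f (cos θ • p.1 - sin θ • p.2), gradient f p.1⟫
        ∂((gaussianMeasure n).prod (gaussianMeasure n))) θ := by
  have hcont := hf.continuous
  have hGcont := hf.continuous_gradient le_rfl
  have hd : Differentiable ℝ f := hf.differentiable one_ne_zero
  have hid := memLp_two_id_gaussianMeasure n
  have hC₀' : 0 ≤ C₀ := (norm_nonneg _).trans (hC₀ 0)
  have hbound : Integrable (fun p : EuclideanSpace ℝ (Fin n) × EuclideanSpace ℝ (Fin n) =>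
      C₀ * ((‖p.1‖ + ‖p.2‖) * C₁)) ((gaussianMeasure n).prod (gaussianMeasure n)) :=
    ((((memLp_fst hid).integrable (by norm_num)).norm.add
      ((memLp_snd hid).integrable (by norm_num)).norm).mul_const C₁).const_mul C₀
  have key := (hasDerivAt_integral_of_dominated_loc_of_deriv_le
    (μ := (gaussianMeasure n).prod (gaussianMeasure n))
    (F := fun θ p => f p.1 * f (cos θ • p.1 + sin θ • p.2))
    (F' := fun θ p => f p.1 *
      ⟪-sin θ • p.1 + cos θ • p.2, gradient f (cos θ • p.1 + sin θ • p.2)⟫)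
    (x₀ := θ) Filter.univ_mem (.of_forall fun t => by fun_prop)
    (Integrable.of_bound (by fun_prop) (C₀ * C₀) (.of_forall fun p => ?_)) (by fun_prop)
    (.of_forall fun p t _ => ?_) hbound (.of_forall fun p t _ => ?_)).2
  · refine key.congr_deriv ?_
    rw [← integral_mul_inner_gradient_snd hf hC₀ hC₁ θ, eq_comm,
      ← (measurePreserving_rotation n θ).integral_comp_of_aestronglyMeasurable (by fun_prop)]
    simp_rw [cos_sub_sin_rotation, ContinuousLinearMap.rotation_apply]
  · rw [norm_mul]
    exact mul_le_mul (hC₀ _) (hC₀ _) (norm_nonneg _) hC₀'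
  · rw [norm_mul]
    refine mul_le_mul (hC₀ _) ((norm_inner_le_norm _ _).trans ?_) (norm_nonneg _) hC₀'
    refine mul_le_mul ?_ ((norm_gradient _).trans_le (hC₁ _)) (norm_nonneg _) (by positivity)
    refine (norm_add_le _ _).trans (add_le_add ?_ ?_) <;> rw [norm_smul]
    · exact mul_le_of_le_one_left (norm_nonneg _) (by simpa using abs_sin_le_one t)
    · exact mul_le_of_le_one_left (norm_nonneg _) (by simpa using abs_cos_le_one t)
  · have h1 : HasDerivAt (fun t => cos t • p.1 + sin t • p.2) (-sin t • p.1 + cos t • p.2) t :=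
      ((hasDerivAt_cos t).smul_const p.1).add ((hasDerivAt_sin t).smul_const p.2)
    have h2 := ((hd (cos t • p.1 + sin t • p.2)).hasFDerivAt.comp_hasDerivAt t h1).const_mul
      (f p.1)
    rw [real_inner_comm, inner_gradient_left]
    exact h2

/-- The dimensional Gaussian Poincaré inequality, with the Laplacian integrated by parts. -/
lemma gaussian_poincare_inner_gradient {C₀ C₁ : ℝ} (hn : 1 ≤ n) (hf : ContDiff ℝ 1 f)
    (hC₀ : ∀ x, ‖f x‖ ≤ C₀) (hC₁ : ∀ x, ‖fderiv ℝ f x‖ ≤ C₁) :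
    ∫ x, f x ^ 2 ∂(gaussianMeasure n) - (∫ x, f x ∂(gaussianMeasure n)) ^ 2 ≤
      ∫ x, ‖gradient f x‖ ^ 2 ∂(gaussianMeasure n) -
        (1 / (2 * n)) * (∫ x, ⟪gradient f x, x⟫ ∂(gaussianMeasure n)) ^ 2 := by
  have hcont := hf.continuous
  set B := ∫ x, ‖gradient f x‖ ^ 2 ∂(gaussianMeasure n)
  set A := ∫ x, ⟪gradient f x, x⟫ ∂(gaussianMeasure n)
  set u : ℝ → ℝ := fun θ => ∫ p, f p.1 * f (cos θ • p.1 + sin θ • p.2)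
      ∂((gaussianMeasure n).prod (gaussianMeasure n)) with hu
  have hF : ∀ θ, HasDerivAt
      (fun θ => u θ - (B - A ^ 2 / n) * cos θ + A ^ 2 / n / 2 * sin θ ^ 2)
      (-sin θ * ∫ p, ⟪gradient f (cos θ • p.1 - sin θ • p.2), gradient f p.1⟫
        ∂((gaussianMeasure n).prod (gaussianMeasure n)) - (B - A ^ 2 / n) * (-sin θ)
        + A ^ 2 / n / 2 * (2 * sin θ * cos θ)) θ := fun θ => by
    have h := ((hasDerivAt_integral_mul_cos_add_sin hf hC₀ hC₁ θ).sub
      ((hasDerivAt_cos θ).const_mul (B - A ^ 2 / n))).add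
      (((hasDerivAt_sin θ).pow 2).const_mul (A ^ 2 / n / 2))
    exact h.congr_deriv (by simp)
  have hmono : MonotoneOn (fun θ => u θ - (B - A ^ 2 / n) * cos θ + A ^ 2 / n / 2 * sin θ ^ 2)
      (Set.Icc 0 (π / 2)) := by
    refine monotoneOn_of_deriv_nonneg (convex_Icc _ _)
      (fun θ _ => (hF θ).continuousAt.continuousWithinAt)
      (fun θ _ => (hF θ).differentiableAt.differentiableWithinAt) fun θ hθ => ?_
    rw [interior_Icc] at hθ
    rw [(hF θ).deriv]
    have hs : 0 ≤ sin θ := sin_nonneg_of_nonneg_of_le_pi hθ.1.le (by linarith [hθ.2, pi_pos])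
    have h := integral_inner_cos_sub_sin_le_sub hn (memLp_gradient hf hC₁) θ
    have := mul_le_mul_of_nonneg_left h hs
    nlinarith
  have h := hmono (Set.left_mem_Icc.2 (by positivity)) (Set.right_mem_Icc.2 (by positivity))
    (by positivity : (0 : ℝ) ≤ π / 2)
  have h0 : u 0 = ∫ x, f x ^ 2 ∂(gaussianMeasure n) := by
    simp only [hu, cos_zero, sin_zero, one_smul, zero_smul, add_zero, ← pow_two]
    exact measurePreserving_fst.integral_comp_of_aestronglyMeasurable
      (g := fun x => f x ^ 2) (by fun_prop)
  have h1 : u (π / 2) = (∫ x, f x ∂(gaussianMeasure n)) ^ 2 := by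
    simp only [hu, cos_pi_div_two, sin_pi_div_two, one_smul, zero_smul, zero_add]
    rw [integral_prod_mul, pow_two]
  simp only [h0, h1, cos_zero, sin_zero, cos_pi_div_two, sin_pi_div_two] at h
  have hK : 1 / (2 * (n : ℝ)) * A ^ 2 = A ^ 2 / n / 2 := by ring
  rw [hK]
  linarith

lemma integral_laplacian_gaussianMeasure {C₁ C₂ : ℝ} (hf : ContDiff ℝ 2 f)
    (hC₁ : ∀ x, ‖fderiv ℝ f x‖ ≤ C₁) (hC₂ : ∀ x, ‖fderiv ℝ (fderiv ℝ f) x‖ ≤ C₂) :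
    ∫ x, laplacian n f x ∂(gaussianMeasure n) =
      ∫ x, ⟪gradient f x, x⟫ ∂(gaussianMeasure n) := by
  have hf' : ContDiff ℝ 1 (fderiv ℝ f) := hf.fderiv_right (by norm_num)
  have hd : Differentiable ℝ (fderiv ℝ f) := hf'.differentiable one_ne_zero
  have hcont := hf'.continuous
  have hcont' : Continuous (fderiv ℝ (fderiv ℝ f)) := hf'.continuous_fderiv one_ne_zero
  have hD : ∀ v x, fderiv ℝ (fderiv ℝ f) x v v = fderiv ℝ (fun y => fderiv ℝ f y v) x v :=
    fun v x => by
      rw [fderiv_clm_apply (hd x) (differentiableAt_const v)]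
      simp
  have i1 : ∀ v : EuclideanSpace ℝ (Fin n),
      Integrable (fun x => fderiv ℝ (fderiv ℝ f) x v v) (gaussianMeasure n) := fun v =>
    Integrable.of_bound (by fun_prop) (C₂ * ‖v‖ * ‖v‖) (.of_forall fun x =>
      (ContinuousLinearMap.le_opNorm₂ _ _ _).trans (by gcongr; exact hC₂ x))
  have hb : ∀ v x, ‖fderiv ℝ f x v‖ ≤ C₁ * ‖v‖ := fun v x =>
    (ContinuousLinearMap.le_opNorm _ _).trans (by gcongr; exact hC₁ x)
  have i2 : ∀ v : EuclideanSpace ℝ (Fin n),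
      Integrable (fun x => fderiv ℝ f x v * ⟪x, v⟫) (gaussianMeasure n) := fun v =>
    ((memLp_inner_gaussianMeasure v).integrable (by norm_num)).bdd_mul
      (by fun_prop) (.of_forall fun x => hb v x)
  have hparts : ∀ v : EuclideanSpace ℝ (Fin n),
      ∫ x, fderiv ℝ (fderiv ℝ f) x v v ∂(gaussianMeasure n) =
        ∫ x, fderiv ℝ f x v * ⟪x, v⟫ ∂(gaussianMeasure n) := fun v => by
    have h := i1 v
    simp_rw [hD] at h ⊢
    exact integral_fderiv_gaussianMeasure (hd.clm_apply (differentiable_const v)) v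
      (Integrable.of_bound (by fun_prop) (C₁ * ‖v‖) (.of_forall fun x => hb v x)) h (i2 v)
  unfold laplacian
  rw [integral_finsetSum _ fun i _ => i1 _]
  simp_rw [hparts]
  rw [← integral_finsetSum _ fun i _ => i2 _]
  congr 1 with x
  rw [← (EuclideanSpace.basisFun (Fin n) ℝ).sum_inner_mul_inner]
  simp only [EuclideanSpace.basisFun_apply, inner_gradient_left]
  simp_rw [real_inner_comm x]

end Interpolation

end GaussianPoincare

lemma exists_norm_fderiv_le {E F : Type*} [NormedAddCommGroup E] [NormedSpace ℝ E]
    [NormedAddCommGroup F] [NormedSpace ℝ F] {g : E → F} (hg : ContDiff ℝ 1 g)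
    (hsupp : HasCompactSupport g) : ∃ C, ∀ x, ‖fderiv ℝ g x‖ ≤ C :=
  (hsupp.fderiv ℝ).exists_bound_of_continuous (hg.continuous_fderiv one_ne_zero)

theorem refined_gaussian_poincare (n : ℕ) (hn : 1 ≤ n)
    (f : EuclideanSpace ℝ (Fin n) → ℝ) (hf : ContDiff ℝ (⊤ : ℕ∞) f)
    (hsupp : HasCompactSupport f) :
    ∫ x, f x ^ 2 ∂(gaussianMeasure n) - (∫ x, f x ∂(gaussianMeasure n)) ^ 2 ≤
      ∫ x, ‖gradient f x‖ ^ 2 ∂(gaussianMeasure n) -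
        (1 / (2 * n)) * (∫ x, laplacian n f x ∂(gaussianMeasure n)) ^ 2 := by
  have hf1 : ContDiff ℝ 1 f := by exact_mod_cast contDiff_infty.1 hf 1
  have hf2 : ContDiff ℝ 2 f := by exact_mod_cast contDiff_infty.1 hf 2
  have hf' : ContDiff ℝ 1 (fderiv ℝ f) := hf2.fderiv_right (by norm_num)
  have hsupp' : HasCompactSupport (fderiv ℝ f) := hsupp.fderiv ℝ
  obtain ⟨C₀, hC₀⟩ := hsupp.exists_bound_of_continuous hf.continuous
  obtain ⟨C₁, hC₁⟩ := exists_norm_fderiv_le hf1 hsupp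
  obtain ⟨C₂, hC₂⟩ := exists_norm_fderiv_le hf' hsupp'
  rw [integral_laplacian_gaussianMeasure hf2 hC₁ hC₂]
  exact gaussian_poincare_inner_gradient hn hf1 hC₀ hC₁
end

section
/- Let n ≥ 1, let α ∈ (0, 2], let t ≥ 0 and let q₁, q₂ satisfy 0 < q₂ ≤ q₁ < 1 and q₂ − 1 = (q₂/q₁)(q₁ − 1) e^{αt}. Then for every measurable function f : ℝ^n → ℝ with 0 < a ≤ f ≤ b for some constants a, b, one has ( ∫_{ℝ^n} f(x)^{q₁} K^α_{1/α}(x) dx )^{1/q₁} ≤ ( ∫_{ℝ^n} ( P^{LOU}_t f (x) )^{q₂} K^α_{1/α}(x) dx )^{1/q₂} (reverse hypercontractive bound for the Lévy–Ornstein–Uhlenbeck semigroup driven by an α-stable process, whose invariant measure K^α_{1/α}(x)dx is not reversible). -/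
open MeasureTheory Real
open scoped RealInnerProductSpace

/-- The `α`-stable kernel `K_t^α` on `ℝ^n`, defined through its Fourier transform. -/
noncomputable def stableKernel (n : ℕ) (α t : ℝ) (x : EuclideanSpace ℝ (Fin n)) : ℝ :=
  (2 * π) ^ (-(n : ℝ)) *
    ∫ ξ : EuclideanSpace ℝ (Fin n),
      (Complex.exp ((⟪x, ξ⟫ : ℂ) * Complex.I - ((t * ‖ξ‖ ^ α : ℝ) : ℂ))).re

/-- The `α`-stable semigroup `L_t^α f = K_t^α ∗ f`, with `L_0^α f = f`. -/
noncomputable def stableSemigroup (n : ℕ) (α t : ℝ) (f : EuclideanSpace ℝ (Fin n) → ℝ)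
    (x : EuclideanSpace ℝ (Fin n)) : ℝ :=
  if t = 0 then f x else ∫ y, stableKernel n α t (x - y) * f y

/-- The Lévy-Ornstein-Uhlenbeck semigroup driven by an `α`-stable process. -/
noncomputable def LOU (n : ℕ) (α t : ℝ) (f : EuclideanSpace ℝ (Fin n) → ℝ)
    (x : EuclideanSpace ℝ (Fin n)) : ℝ :=
  stableSemigroup n α ((1 - Real.exp (-α * t)) / α) f (Real.exp (-t) • x)

open Filter Topology
open scoped ENNReal FourierTransform

section PowerMean

theorem lintegral_rpow_lintegral_le {X Y : Type*} [MeasurableSpace X] [MeasurableSpace Y]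
    {μ : Measure X} {ν : Measure Y} [SFinite μ] [SFinite ν] {h : X → Y → ℝ≥0∞}
    (hh : Measurable (Function.uncurry h)) {p : ℝ} (hp : 1 ≤ p)
    (hfin : ∫⁻ x, (∫⁻ y, h x y ∂ν) ^ p ∂μ ≠ ∞) :
    (∫⁻ x, (∫⁻ y, h x y ∂ν) ^ p ∂μ) ^ (1 / p) ≤ ∫⁻ y, (∫⁻ x, h x y ^ p ∂μ) ^ (1 / p) ∂ν := by
  rcases hp.eq_or_lt with rfl | hp
  · simpa using (lintegral_lintegral_swap hh.aemeasurable).le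
  set H : X → ℝ≥0∞ := fun x => ∫⁻ y, h x y ∂ν with hH
  have hHm : Measurable H := hh.lintegral_prod_right'
  set S : ℝ≥0∞ := ∫⁻ x, H x ^ p ∂μ with hS
  have hpq : p.HolderConjugate (p / (p - 1)) := Real.HolderConjugate.conjExponent hp
  have hp0 : 0 < p := by linarith
  have key : S ≤ (∫⁻ y, (∫⁻ x, h x y ^ p ∂μ) ^ (1 / p) ∂ν) * S ^ (1 - 1 / p) := by
    calc S = ∫⁻ x, ∫⁻ y, h x y * H x ^ (p - 1) ∂ν ∂μ := by
          refine lintegral_congr fun x => ?_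
          have hx : Measurable (h x) := hh.comp measurable_prodMk_left
          rw [lintegral_mul_const _ hx]
          change H x ^ p = H x * H x ^ (p - 1)
          nth_rw 2 [← ENNReal.rpow_one (H x)]
          rw [← ENNReal.rpow_add_of_nonneg _ _ (by norm_num) (by linarith)]
          congr 1; ring
      _ = ∫⁻ y, ∫⁻ x, h x y * H x ^ (p - 1) ∂μ ∂ν := by
          refine lintegral_lintegral_swap ?_
          exact (hh.mul ((hHm.comp measurable_fst).pow_const _)).aemeasurable
      _ ≤ ∫⁻ y, (∫⁻ x, h x y ^ p ∂μ) ^ (1 / p) * S ^ (1 - 1 / p) ∂ν := by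
          refine lintegral_mono fun y => ?_
          refine (ENNReal.lintegral_mul_le_Lp_mul_Lq μ hpq
            (hh.comp measurable_prodMk_right).aemeasurable
            (hHm.pow_const _).aemeasurable).trans_eq ?_
          congr 2
          · refine lintegral_congr fun x => ?_
            rw [← ENNReal.rpow_mul]
            congr 1
            field_simp [(by linarith : p - 1 ≠ 0)]
          · have : p - 1 ≠ 0 := by linarith
            field_simp
      _ = _ := by
          rw [lintegral_mul_const]
          exact ((hh.pow_const p).lintegral_prod_left').pow_const _
  rcases eq_or_ne S 0 with h0 | h0
  · rw [h0, ENNReal.zero_rpow_of_pos (by positivity)]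
    exact zero_le
  have hne : S ^ (1 - 1 / p) ≠ 0 := by
    simp [ENNReal.rpow_eq_zero_iff, h0, hfin]
  have hnt : S ^ (1 - 1 / p) ≠ ∞ := by
    simp [ENNReal.rpow_eq_top_iff, h0, hfin]
  refine (ENNReal.mul_le_mul_iff_left hne hnt).1 ?_
  rw [← ENNReal.rpow_add _ _ h0 hfin]
  simpa using key

variable {E : Type*} [AddCommGroup E] [MeasurableSpace E]

/-- The `p`-power mean of `g` over the translate by `x` of the measure `μ`. -/
noncomputable def powerMean (μ : Measure E) (p : ℝ) (g : E → ℝ≥0∞) (x : E) : ℝ≥0∞ :=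
  (∫⁻ y, g (x + y) ^ p ∂μ) ^ (1 / p)

theorem powerMean_mono (μ : Measure E) {p : ℝ} (hp : 0 < p) {g h : E → ℝ≥0∞} (hgh : g ≤ h) :
    powerMean μ p g ≤ powerMean μ p h := fun x => by
  refine ENNReal.rpow_le_rpow (lintegral_mono fun y => ?_) (by positivity)
  exact ENNReal.rpow_le_rpow (hgh _) hp.le

theorem powerMean_le_const (μ : Measure E) [IsProbabilityMeasure μ] {p : ℝ} (hp : 0 < p)
    {g : E → ℝ≥0∞} {b : ℝ≥0∞} (hb : ∀ x, g x ≤ b) (x : E) : powerMean μ p g x ≤ b := by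
  refine (powerMean_mono μ hp (h := fun _ => b) hb x).trans_eq ?_
  simp [powerMean, ← ENNReal.rpow_mul, hp.ne']

/-- Iterated power means over `μ`, the head of the list being the outermost exponent. -/
noncomputable def mixedMean (μ : Measure E) (l : List ℝ) (g : E → ℝ≥0∞) : E → ℝ≥0∞ :=
  l.foldr (powerMean μ) g

theorem mixedMean_le_const (μ : Measure E) [IsProbabilityMeasure μ] {l : List ℝ}
    (hl : ∀ p ∈ l, 0 < p) {g : E → ℝ≥0∞} {b : ℝ≥0∞} (hb : ∀ x, g x ≤ b) (x : E) :
    mixedMean μ l g x ≤ b := by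
  induction l generalizing x with
  | nil => exact hb x
  | cons p l ih =>
    exact powerMean_le_const μ (hl p (by simp)) (ih fun p' hp' => hl p' (by simp [hp'])) x

variable [MeasurableAdd₂ E]

theorem measurable_powerMean (μ : Measure E) [SFinite μ] (p : ℝ) {g : E → ℝ≥0∞}
    (hg : Measurable g) : Measurable (powerMean μ p g) := by
  have : Measurable fun z : E × E => g (z.1 + z.2) ^ p :=
    (hg.comp measurable_add).pow_const p
  exact this.lintegral_prod_right'.pow_const _

theorem powerMean_powerMean (μ ν : Measure E) [SFinite μ] [SFinite ν] {p : ℝ} (hp : 0 < p)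
    {g : E → ℝ≥0∞} (hg : Measurable g) :
    powerMean μ p (powerMean ν p g) = powerMean (μ ∗ ν) p g := by
  ext x
  have : Measurable fun y => g (x + y) ^ p := (hg.comp (measurable_const_add x)).pow_const p
  simp only [powerMean]
  rw [Measure.lintegral_conv this]
  simp only [← ENNReal.rpow_mul, one_div, inv_mul_cancel₀ hp.ne', ENNReal.rpow_one, add_assoc]

theorem powerMean_one_powerMean_le (μ ν : Measure E) [IsProbabilityMeasure μ]
    [IsProbabilityMeasure ν] {q : ℝ} (hq : 0 < q) (hq1 : q ≤ 1) {g : E → ℝ≥0∞}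
    (hg : Measurable g) {b : ℝ≥0∞} (hb : b ≠ ∞) (hgb : ∀ x, g x ≤ b) :
    powerMean μ 1 (powerMean ν q g) ≤ powerMean ν q (powerMean μ 1 g) := fun x => by
  have hh : Measurable (Function.uncurry fun y z => g (x + y + z) ^ q) := by
    refine (hg.comp ?_).pow_const q
    exact (measurable_fst.const_add x).add measurable_snd
  have hfin : ∫⁻ y, (∫⁻ z, g (x + y + z) ^ q ∂ν) ^ (1 / q) ∂μ ≠ ∞ := by
    refine ((lintegral_mono fun y => powerMean_le_const ν hq hgb (x + y)).trans_lt ?_).ne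
    simpa using hb.lt_top
  have := ENNReal.rpow_le_rpow
    (lintegral_rpow_lintegral_le (μ := μ) (ν := ν) hh (one_le_one_div hq hq1) hfin)
    (by positivity : 0 ≤ 1 / q)
  simp only [powerMean, ENNReal.rpow_one, one_div, inv_one, inv_inv] at this ⊢
  rw [← ENNReal.rpow_mul, mul_inv_cancel₀ hq.ne', ENNReal.rpow_one] at this
  refine this.trans_eq ?_
  congr 1
  refine lintegral_congr fun z => ?_
  congr 1
  refine lintegral_congr fun y => ?_
  rw [← ENNReal.rpow_mul, mul_inv_cancel₀ hq.ne', ENNReal.rpow_one, add_right_comm]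

theorem powerMean_le_powerMean_one (μ : Measure E) [IsProbabilityMeasure μ] {q : ℝ} (hq : 0 < q)
    (hq1 : q ≤ 1) {g : E → ℝ≥0∞} (hg : Measurable g) :
    powerMean μ q g ≤ powerMean μ 1 g := fun x => by
  have := eLpNorm'_le_eLpNorm'_of_exponent_le hq hq1 μ
    (f := fun y => g (x + y)) (hg.comp (measurable_const_add x)).aestronglyMeasurable
  simpa [eLpNorm', powerMean] using this

theorem powerMean_prod_le {ι : Type*} [Fintype ι] (μ : Measure E) {q w : ℝ} (hq : 0 < q)
    (hw : 0 ≤ w) {p : ι → ℝ} (hp : ∀ j, 0 < p j) (hsum : ∑ j, w / p j = 1 / q)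
    {g : ι → E → ℝ≥0∞} (hg : ∀ j, Measurable (g j)) (x : E) :
    powerMean μ q (fun z => ∏ j, g j z ^ w) x ≤ ∏ j, powerMean μ (p j) (g j) x ^ w := by
  have key := ENNReal.lintegral_prod_norm_pow_le (μ := μ) Finset.univ
    (f := fun j y => g j (x + y) ^ p j) (p := fun j => q * (w / p j))
    (fun j _ => (((hg j).comp (measurable_const_add x)).pow_const _).aemeasurable)
    (by rw [← Finset.mul_sum, hsum]; field_simp)
    (fun j _ => by have := hp j; positivity)
  have := ENNReal.rpow_le_rpow key (by positivity : 0 ≤ 1 / q)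
  rw [← ENNReal.prod_rpow_of_nonneg (by positivity)] at this
  refine le_trans (le_of_eq ?_) (this.trans_eq ?_)
  · simp only [powerMean]
    congr 1
    refine lintegral_congr fun y => ?_
    rw [← ENNReal.prod_rpow_of_nonneg hq.le]
    refine Finset.prod_congr rfl fun j _ => ?_
    rw [← ENNReal.rpow_mul, ← ENNReal.rpow_mul]
    congr 1
    have := (hp j).ne'
    field_simp
  · refine Finset.prod_congr rfl fun j _ => ?_
    rw [powerMean, ← ENNReal.rpow_mul, ← ENNReal.rpow_mul]
    congr 1
    have := (hp j).ne'
    field_simp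

theorem measurable_mixedMean (μ : Measure E) [SFinite μ] (l : List ℝ) {g : E → ℝ≥0∞}
    (hg : Measurable g) : Measurable (mixedMean μ l g) := by
  induction l with
  | nil => exact hg
  | cons p l ih => exact measurable_powerMean μ p ih

theorem mixedMean_replicate_succ {μ : ℝ → Measure E} (hprob : ∀ t > 0, IsProbabilityMeasure (μ t))
    (hconv : ∀ s > 0, ∀ t > 0, μ s ∗ μ t = μ (s + t)) {δ : ℝ} (hδ : 0 < δ) {p : ℝ} (hp : 0 < p)
    {g : E → ℝ≥0∞} (hg : Measurable g) (k : ℕ) :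
    mixedMean (μ δ) (List.replicate (k + 1) p) g = powerMean (μ ((k + 1) * δ)) p g := by
  induction k with
  | zero => simp [mixedMean]
  | succ k ih =>
    rw [List.replicate_succ]
    change powerMean _ _ (mixedMean (μ δ) (List.replicate (k + 1) p) g) = _
    have h1 : 0 < ((k : ℝ) + 1) * δ := by positivity
    have := hprob _ hδ
    have := hprob _ h1
    rw [ih, powerMean_powerMean _ _ hp hg, hconv _ hδ _ h1]
    congr 2
    push_cast; ring

theorem mixedMean_replicate {μ : ℝ → Measure E} (hprob : ∀ t > 0, IsProbabilityMeasure (μ t))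
    (hconv : ∀ s > 0, ∀ t > 0, μ s ∗ μ t = μ (s + t)) {δ : ℝ} (hδ : 0 < δ) {p : ℝ} (hp : 0 < p)
    {g : E → ℝ≥0∞} (hg : Measurable g) {k : ℕ} (hk : 0 < k) :
    mixedMean (μ δ) (List.replicate k p) g = powerMean (μ (k * δ)) p g := by
  obtain ⟨k, rfl⟩ := Nat.exists_eq_add_of_lt hk
  simpa using mixedMean_replicate_succ hprob hconv hδ hp hg k

theorem powerMean_one_mixedMean_replicate_le (μ : Measure E) [IsProbabilityMeasure μ] {q : ℝ}
    (hq : 0 < q) (hq1 : q ≤ 1) (k : ℕ) {g : E → ℝ≥0∞} (hg : Measurable g) {b : ℝ≥0∞}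
    (hb : b ≠ ∞) (hgb : ∀ x, g x ≤ b) :
    powerMean μ 1 (mixedMean μ (List.replicate k q) g) ≤
      mixedMean μ (List.replicate k q) (powerMean μ 1 g) := by
  induction k with
  | zero => exact le_rfl
  | succ k ih =>
    rw [List.replicate_succ]
    refine le_trans (powerMean_one_powerMean_le μ μ hq hq1 (measurable_mixedMean μ _ hg) hb
      (mixedMean_le_const μ ?_ hgb)) (powerMean_mono μ hq ih)
    intro p hp
    rw [List.eq_of_mem_replicate hp]
    exact hq

theorem mixedMean_le_sorted (μ : Measure E) [IsProbabilityMeasure μ] {q : ℝ}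
    (hq : 0 < q) (hq1 : q ≤ 1) {g : E → ℝ≥0∞} (hg : Measurable g) {b : ℝ≥0∞}
    (hb : b ≠ ∞) (hgb : ∀ x, g x ≤ b) (l : List Bool) :
    mixedMean μ (l.map fun c => if c then q else 1) g ≤
      mixedMean μ (List.replicate (l.count true) q)
        (mixedMean μ (List.replicate (l.count false) 1) g) := by
  induction l with
  | nil => exact le_rfl
  | cons c l ih =>
    have hpos : ∀ p ∈ List.replicate (l.count false) (1 : ℝ), 0 < p := by
      intro p hp
      rw [List.eq_of_mem_replicate hp]
      exact one_pos
    cases c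
    · simp only [List.map_cons, List.count_cons_self, Bool.false_eq_true, if_false,
        List.count_cons_of_ne (by simp : (false : Bool) ≠ true), List.replicate_succ]
      exact le_trans (powerMean_mono μ one_pos ih)
        (powerMean_one_mixedMean_replicate_le μ hq hq1 _ (measurable_mixedMean μ _ hg) hb
          (mixedMean_le_const μ hpos hgb))
    · simp only [List.map_cons, List.count_cons_self, if_true,
        List.count_cons_of_ne (by simp : (true : Bool) ≠ false), List.replicate_succ]
      exact powerMean_mono μ hq ih

theorem mixedMean_le_prod {ι κ : Type*} [Fintype ι] (μ : Measure E) [SFinite μ] {q w : ℝ}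
    (hq : 0 < q) (hw : 0 ≤ w) (hw1 : ∑ _j : ι, w = 1) {p : ι → κ → ℝ} (hp : ∀ j i, 0 < p j i)
    (hsum : ∀ i, ∑ j, w / p j i = 1 / q) {g : E → ℝ≥0∞} (hg : Measurable g) (l : List κ) (x : E) :
    mixedMean μ (l.map fun _ => q) g x ≤ ∏ j, mixedMean μ (l.map (p j)) g x ^ w := by
  induction l generalizing x with
  | nil =>
    change g x ≤ ∏ _j : ι, g x ^ w
    rw [Finset.prod_const, ← ENNReal.rpow_natCast, ← ENNReal.rpow_mul]
    have : w * ((Finset.univ : Finset ι).card : ℝ) = 1 := by simpa [mul_comm] using hw1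
    rw [this, ENNReal.rpow_one]
  | cons i l ih =>
    refine (powerMean_mono μ hq (fun z => ih z) x).trans ?_
    exact powerMean_prod_le μ hq hw (fun j => hp j i) (hsum i)
      (fun j => measurable_mixedMean μ _ hg) x

theorem card_filter_add_val_lt {m k : ℕ} [NeZero m] (hk : k ≤ m) (i : Fin m) :
    (Finset.univ.filter fun j : Fin m => ((i + j : Fin m) : ℕ) < k).card = k := by
  have h1 : (Finset.univ.filter fun j : Fin m => ((i + j : Fin m) : ℕ) < k).card =
      (Finset.univ.filter fun j : Fin m => (j : ℕ) < k).card :=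
    Finset.card_equiv (Equiv.addLeft i) (by simp)
  rw [h1, Fin.card_filter_val_lt, min_eq_right hk]

theorem powerMean_le_of_nat_ratio {μ : ℝ → Measure E}
    (hprob : ∀ t > 0, IsProbabilityMeasure (μ t))
    (hconv : ∀ s > 0, ∀ t > 0, μ s ∗ μ t = μ (s + t)) {δ : ℝ} (hδ : 0 < δ) {k m : ℕ} (hk : 0 < k)
    (hkm : k < m) {q₁ q : ℝ} (hq₁ : 0 < q₁) (hq : 0 < q) (hq1 : q ≤ 1)
    (hrel : m * (1 / q₁ - 1) = k * (1 / q - 1)) {g : E → ℝ≥0∞} (hg : Measurable g) {b : ℝ≥0∞}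
    (hb : b ≠ ∞) (hgb : ∀ x, g x ≤ b) :
    powerMean (μ (m * δ)) q₁ g ≤
      powerMean (μ (k * δ)) q (powerMean (μ ((m - k : ℕ) * δ)) 1 g) := fun x => by
  have : NeZero m := ⟨by omega⟩
  have hm0 : (m : ℝ) ≠ 0 := by exact_mod_cast NeZero.ne m
  have := hprob δ hδ
  have hδ' : 0 < ((m - k : ℕ) : ℝ) * δ := by
    have : 0 < m - k := by omega
    positivity
  have := hprob _ hδ'
  set c : Fin m → Fin m → Bool := fun j i => decide (((i + j : Fin m) : ℕ) < k) with hc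
  have hcount : ∀ j, ((List.finRange m).map (c j)).count true = k := fun j => by
    have h := card_filter_add_val_lt hkm.le j
    rw [List.count, List.countP_map, List.countP_eq_length_filter]
    rw [← h, ← Finset.length_toList]
    have : (Finset.univ.filter fun i : Fin m => ((j + i : Fin m) : ℕ) < k).toList.Perm
        ((List.finRange m).filter ((fun z => z == true) ∘ c j)) := by
      rw [List.perm_ext_iff_of_nodup (Finset.nodup_toList _) ((List.nodup_finRange m).filter _)]
      intro i
      simp [hc, add_comm]
    exact this.length_eq.symm
  have hcount' : ∀ j, ((List.finRange m).map (c j)).count false = m - k := fun j => by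
    have h := List.count_true_add_count_false ((List.finRange m).map (c j))
    rw [hcount j] at h
    simp at h
    omega
  have main := mixedMean_le_prod (ι := Fin m) (κ := Fin m) (μ δ) (q := q₁) (w := 1 / m) hq₁
    (by positivity) (by simp [hm0]) (p := fun j i => if c j i then q else 1)
    (fun j i => by split_ifs <;> positivity)
    (fun i => by
      have h := card_filter_add_val_lt hkm.le i
      have h2 : ∀ j : Fin m, (1 / (m : ℝ)) / (if c j i = true then q else 1) =
          1 / m + (if ((i + j : Fin m) : ℕ) < k then (1 / (m : ℝ)) * (1 / q - 1) else 0) := by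
        intro j
        by_cases hj : ((i + j : Fin m) : ℕ) < k
        · simp [hc, hj]; ring
        · simp [hc, hj]
      simp only [h2]
      rw [Finset.sum_add_distrib, ← Finset.sum_filter, Finset.sum_const, Finset.sum_const, h]
      simp only [Finset.card_univ, Fintype.card_fin, nsmul_eq_mul]
      have : (k : ℝ) * (1 / m * (1 / q - 1)) = 1 / m * (m * (1 / q₁ - 1)) := by rw [hrel]; ring
      rw [this]
      field_simp
      ring) hg (List.finRange m) x
  have hrep : (List.finRange m).map (fun _ => q₁) = List.replicate m q₁ := by simp
  rw [hrep, mixedMean_replicate hprob hconv hδ hq₁ hg (by omega)] at main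
  refine main.trans ?_
  have hle : ∀ j, mixedMean (μ δ) ((List.finRange m).map fun i => if c j i then q else 1) g x ≤
      powerMean (μ (k * δ)) q (powerMean (μ ((m - k : ℕ) * δ)) 1 g) x := fun j => by
    have h := mixedMean_le_sorted (μ δ) hq hq1 hg hb hgb ((List.finRange m).map (c j)) x
    rw [hcount, hcount', List.map_map, mixedMean_replicate hprob hconv hδ one_pos hg (by omega),
      mixedMean_replicate hprob hconv hδ hq (measurable_powerMean _ _ hg) hk] at h
    exact h
  refine (Finset.prod_le_prod' fun j _ => ENNReal.rpow_le_rpow (hle j) (by positivity)).trans_eq ?_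
  rw [Finset.prod_const, ← ENNReal.rpow_natCast, ← ENNReal.rpow_mul]
  simp [hm0]

theorem powerMean_le_of_le_nat_ratio {μ : ℝ → Measure E}
    (hprob : ∀ t > 0, IsProbabilityMeasure (μ t))
    (hconv : ∀ s > 0, ∀ t > 0, μ s ∗ μ t = μ (s + t)) {r T : ℝ} (hr : 0 < r) {k m : ℕ}
    (hkm : k < m) (hrk : r < k * (T / m)) {q₁ q : ℝ} (hq₁ : 0 < q₁) (hq : 0 < q) (hq1 : q ≤ 1)
    (hrel : m * (1 / q₁ - 1) = k * (1 / q - 1)) {g : E → ℝ≥0∞} (hg : Measurable g) {b : ℝ≥0∞}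
    (hb : b ≠ ∞) (hgb : ∀ x, g x ≤ b) :
    powerMean (μ T) q₁ g ≤ powerMean (μ r) q (powerMean (μ (T - r)) 1 g) := by
  have hm : (0 : ℝ) < m := by exact_mod_cast (by omega : 0 < m)
  have hk : 0 < k := by
    rcases Nat.eq_zero_or_pos k with rfl | h
    · simp at hrk; linarith
    · exact h
  have hδ : 0 < T / m := pos_of_mul_pos_right (hr.trans hrk) (by positivity)
  have hd : 0 < k * (T / m) - r := by linarith
  have hmk : 0 < ((m - k : ℕ) : ℝ) * (T / m) := by
    have : 0 < m - k := by omega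
    positivity
  have := hprob _ hr
  have := hprob _ hd
  have := hprob _ hmk
  have h := powerMean_le_of_nat_ratio hprob hconv hδ hk hkm hq₁ hq hq1 hrel hg hb hgb
  rw [mul_div_cancel₀ T hm.ne'] at h
  refine h.trans ?_
  have hadd : μ (k * (T / m)) = μ r ∗ μ (k * (T / m) - r) := by
    rw [hconv _ hr _ hd]; congr 1; ring
  have hadd' : μ (T - r) = μ (k * (T / m) - r) ∗ μ ((m - k : ℕ) * (T / m)) := by
    rw [hconv _ hd _ hmk]; congr 1
    rw [Nat.cast_sub hkm.le]; field_simp; ring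
  rw [hadd, ← powerMean_powerMean _ _ hq (measurable_powerMean _ _ hg), hadd',
    ← powerMean_powerMean _ _ one_pos hg]
  exact powerMean_mono _ hq (powerMean_le_powerMean_one _ hq hq1 (measurable_powerMean _ _ hg))

end PowerMean

section PositiveDefinite

variable {V : Type*} [NormedAddCommGroup V] [InnerProductSpace ℝ V]

theorem re_cexp_gaussian_eq (b : ℝ) (x ξ : V) :
    (Complex.exp (-(b : ℂ) * ‖ξ‖ ^ 2 + Complex.I * ⟪x, ξ⟫)).re =
      cos ⟪x, ξ⟫ * exp (-b * ‖ξ‖ ^ 2) := by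
  have : -(b : ℂ) * ‖ξ‖ ^ 2 + Complex.I * ⟪x, ξ⟫ =
      ((-b * ‖ξ‖ ^ 2 : ℝ) : ℂ) + (⟪x, ξ⟫ : ℝ) * Complex.I := by push_cast; ring
  rw [this, Complex.exp_add, ← Complex.ofReal_exp, Complex.re_ofReal_mul,
    Complex.exp_ofReal_mul_I_re, mul_comm]

variable [FiniteDimensional ℝ V] [MeasurableSpace V] [BorelSpace V]

/-- The cosine transforms of all Gaussian truncations of `φ` are nonnegative. -/
def GaussianPositive (φ : V → ℝ) : Prop :=
  ∀ δ > 0, ∀ x : V, 0 ≤ ∫ ξ : V, cos ⟪x, ξ⟫ * φ ξ * exp (-δ * ‖ξ‖ ^ 2)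

theorem integrable_cos_mul_gaussian {b : ℝ} (hb : 0 < b) (x : V) :
    Integrable fun ξ : V => cos ⟪x, ξ⟫ * exp (-b * ‖ξ‖ ^ 2) := by
  have := (GaussianFourier.integrable_cexp_neg_mul_sq_norm_add (V := V) (b := (b : ℂ))
    (by simpa using hb) Complex.I x).re
  refine this.congr (ae_of_all _ fun ξ => ?_)
  exact re_cexp_gaussian_eq b x ξ

theorem integrable_gaussian {b : ℝ} (hb : 0 < b) :
    Integrable fun ξ : V => exp (-b * ‖ξ‖ ^ 2) := by
  simpa using integrable_cos_mul_gaussian (V := V) hb 0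

theorem integral_cos_mul_gaussian_nonneg {b : ℝ} (hb : 0 < b) (x : V) :
    0 ≤ ∫ ξ : V, cos ⟪x, ξ⟫ * exp (-b * ‖ξ‖ ^ 2) := by
  have hInt := GaussianFourier.integrable_cexp_neg_mul_sq_norm_add (V := V) (b := (b : ℂ))
    (by simpa using hb) Complex.I x
  have h : ∫ ξ : V, cos ⟪x, ξ⟫ * exp (-b * ‖ξ‖ ^ 2) =
      (∫ ξ : V, Complex.exp (-(b : ℂ) * ‖ξ‖ ^ 2 + Complex.I * ⟪x, ξ⟫)).re := by
    rw [← Complex.reCLM_apply, ← Complex.reCLM.integral_comp_comm hInt]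
    exact integral_congr_ae (ae_of_all _ fun ξ => (re_cexp_gaussian_eq b x ξ).symm)
  rw [h, GaussianFourier.integral_cexp_neg_mul_sq_norm_add (by simpa using hb)]
  have : (π / b : ℂ) ^ (Module.finrank ℝ V / 2 : ℂ) *
      Complex.exp (Complex.I ^ 2 * ‖x‖ ^ 2 / (4 * b)) =
      (((π / b) ^ (Module.finrank ℝ V / 2 : ℝ) * exp (-‖x‖ ^ 2 / (4 * b)) : ℝ) : ℂ) := by
    rw [Complex.ofReal_mul, Complex.ofReal_cpow (by positivity)]
    push_cast
    simp
  rw [this, Complex.ofReal_re]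
  positivity

theorem gaussianPositive_polynomial {P : Polynomial ℝ} (hP : ∀ k, 0 ≤ P.coeff k) {u : ℝ}
    (hu : 0 ≤ u) : GaussianPositive fun ξ : V => P.eval (exp (-u * ‖ξ‖ ^ 2)) := by
  intro δ hδ x
  have hpos : ∀ k : ℕ, 0 < k * u + δ := fun k => by positivity
  have h : ∀ ξ : V, cos ⟪x, ξ⟫ * P.eval (exp (-u * ‖ξ‖ ^ 2)) * exp (-δ * ‖ξ‖ ^ 2) =
      ∑ k ∈ Finset.range (P.natDegree + 1),
        P.coeff k * (cos ⟪x, ξ⟫ * exp (-(k * u + δ) * ‖ξ‖ ^ 2)) := by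
    intro ξ
    rw [Polynomial.eval_eq_sum_range, Finset.mul_sum, Finset.sum_mul]
    refine Finset.sum_congr rfl fun k _ => ?_
    have : exp (-(k * u + δ) * ‖ξ‖ ^ 2) = exp (-u * ‖ξ‖ ^ 2) ^ k * exp (-δ * ‖ξ‖ ^ 2) := by
      rw [← Real.exp_nat_mul, ← Real.exp_add]; ring_nf
    rw [this]; ring
  simp only [h]
  rw [integral_finsetSum _ fun k _ => (integrable_cos_mul_gaussian (hpos k) x).const_mul _]
  refine Finset.sum_nonneg fun k _ => ?_
  rw [integral_const_mul]
  exact mul_nonneg (hP k) (integral_cos_mul_gaussian_nonneg (hpos k) x)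

theorem GaussianPositive.of_tendsto {φ : ℕ → V → ℝ} {ψ : V → ℝ} (hφ : ∀ j, GaussianPositive (φ j))
    (hm : ∀ j, Measurable (φ j)) (hb : ∀ j, ∀ᵐ ξ, |φ j ξ| ≤ 1)
    (hlim : ∀ᵐ ξ, Tendsto (fun j => φ j ξ) atTop (𝓝 (ψ ξ))) : GaussianPositive ψ := by
  intro δ hδ x
  refine ge_of_tendsto' (tendsto_integral_of_dominated_convergence
    (F := fun j ξ => cos ⟪x, ξ⟫ * φ j ξ * exp (-δ * ‖ξ‖ ^ 2))
    (fun ξ : V => exp (-δ * ‖ξ‖ ^ 2)) ?_ (integrable_gaussian hδ) ?_ ?_)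
    fun j => hφ j δ hδ x
  · intro j
    have := hm j
    exact Measurable.aestronglyMeasurable (by fun_prop)
  · intro j
    filter_upwards [hb j] with ξ hξ
    rw [norm_mul, norm_mul, Real.norm_eq_abs, Real.norm_eq_abs, Real.norm_eq_abs, Real.abs_exp]
    have h1 := Real.abs_cos_le_one ⟪x, ξ⟫
    calc _ ≤ 1 * 1 * exp (-δ * ‖ξ‖ ^ 2) := by gcongr
      _ = _ := by ring
  · filter_upwards [hlim] with ξ hξ
    exact (hξ.const_mul _).mul_const _

theorem neg_one_pow_mul_choose_succ_nonneg {β : ℝ} (h0 : 0 ≤ β) (h1 : β ≤ 1) (k : ℕ) :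
    0 ≤ (-1) ^ k * Ring.choose β (k + 1) := by
  have hrec : ∀ k : ℕ, ((k : ℝ) + 1) * Ring.choose β (k + 1) = Ring.choose β k * (β - k) := by
    intro k
    simp only [Ring.choose_eq_smul, descPochhammer_succ_right, Nat.factorial_succ, smul_eq_mul]
    rw [Polynomial.smeval_mul]
    have : ((k.factorial : ℕ) : ℝ) ≠ 0 := by exact_mod_cast k.factorial_ne_zero
    simp [Polynomial.smeval_sub, Polynomial.smeval_natCast, Polynomial.smeval_X]
    field_simp
  induction k with
  | zero => simpa using h0
  | succ k ih =>
    have h := hrec (k + 1)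
    push_cast at h
    have h2 : ((k : ℝ) + 1 + 1) * ((-1) ^ (k + 1) * Ring.choose β (k + 1 + 1)) =
        ((-1) ^ k * Ring.choose β (k + 1)) * (k + 1 - β) := by
      rw [pow_succ]; linear_combination -(-1) ^ k * h
    have h3 : 0 ≤ ((k : ℝ) + 1 + 1) * ((-1) ^ (k + 1) * Ring.choose β (k + 1 + 1)) := by
      rw [h2]
      exact mul_nonneg ih (by have : (0 : ℝ) ≤ k := by positivity
                              linarith)
    exact nonneg_of_mul_nonneg_right h3 (by positivity)

theorem hasSum_one_sub_one_sub_rpow (β : ℝ) {z : ℝ} (hz : |z| < 1) :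
    HasSum (fun k : ℕ => (-1) ^ k * Ring.choose β (k + 1) * z ^ (k + 1)) (1 - (1 - z) ^ β) := by
  have h := (Real.one_add_rpow_hasFPowerSeriesOnBall_zero (a := β)).hasSum (y := -z)
    (by simpa [← ofReal_norm, ← ENNReal.ofReal_one] using hz)
  simp only [binomialSeries_apply, List.ofFn_const, List.prod_replicate, zero_add,
    smul_eq_mul] at h
  have h' := ((hasSum_nat_add_iff' 1).2 h).neg
  simp only [Finset.range_one, Finset.sum_singleton, Ring.choose_zero_right, pow_zero, mul_one,
    neg_sub, ← sub_eq_add_neg] at h'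
  refine h'.congr_fun ?_ 
  intro k
  rw [neg_pow z, pow_succ]; ring

theorem polynomial_coeff_pow_nonneg {P : Polynomial ℝ} (hP : ∀ k, 0 ≤ P.coeff k) (N k : ℕ) :
    0 ≤ (P ^ N).coeff k := by
  induction N generalizing k with
  | zero => rw [pow_zero, Polynomial.coeff_one]; split_ifs <;> norm_num
  | succ N ih =>
    rw [pow_succ, Polynomial.coeff_mul]
    exact Finset.sum_nonneg fun _ _ => mul_nonneg (ih _) (hP _)

theorem gaussianPositive_one_sub_rpow_pow [Nontrivial V] {β : ℝ} (h0 : 0 < β) (h1 : β ≤ 1)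
    {u : ℝ} (hu : 0 < u) (N : ℕ) :
    GaussianPositive fun ξ : V => (1 - (1 - exp (-u * ‖ξ‖ ^ 2)) ^ β) ^ N := by
  set c : ℕ → ℝ := fun k => (-1) ^ k * Ring.choose β (k + 1) with hc
  have hc0 : ∀ k, 0 ≤ c k := neg_one_pow_mul_choose_succ_nonneg h0.le h1
  set P : ℕ → Polynomial ℝ := fun M =>
    ∑ k ∈ Finset.range M, Polynomial.C (c k) * Polynomial.X ^ (k + 1) with hPdef
  have hP : ∀ M k, 0 ≤ (P M).coeff k := by
    intro M k
    simp only [hPdef, Polynomial.finsetSum_coeff, Polynomial.coeff_C_mul, Polynomial.coeff_X_pow]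
    exact Finset.sum_nonneg fun i _ => mul_nonneg (hc0 i) (by split_ifs <;> norm_num)
  have heval : ∀ M z, (P M).eval z = ∑ k ∈ Finset.range M, c k * z ^ (k + 1) := by
    intro M z
    simp [hPdef, Polynomial.eval_finsetSum]
  have hne : ∀ᵐ ξ : V, ξ ≠ 0 := by
    simp [ae_iff]
  have hz : ∀ ξ : V, ξ ≠ 0 → exp (-u * ‖ξ‖ ^ 2) < 1 := by
    intro ξ hξ
    have : 0 < ‖ξ‖ := norm_pos_iff.2 hξ
    rw [Real.exp_lt_one_iff]
    have : 0 < u * ‖ξ‖ ^ 2 := by positivity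
    linarith
  refine GaussianPositive.of_tendsto
    (φ := fun M ξ => (P M ^ N).eval (exp (-u * ‖ξ‖ ^ 2)))
    (fun M => gaussianPositive_polynomial (polynomial_coeff_pow_nonneg (hP M) N) hu.le)
    (fun M => ?_) (fun M => ?_) ?_
  · exact ((P M ^ N).continuous.comp (by fun_prop)).measurable
  · filter_upwards [hne] with ξ hξ
    have hlt := hz ξ hξ
    have hpos := Real.exp_pos (-u * ‖ξ‖ ^ 2)
    have hs := hasSum_one_sub_one_sub_rpow β (by rwa [abs_of_pos hpos])
    have hle : (P M).eval (exp (-u * ‖ξ‖ ^ 2)) ≤ 1 := by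
      rw [heval]
      refine (sum_le_hasSum _ (fun k _ => mul_nonneg (hc0 k) (by positivity)) hs).trans ?_
      have : 0 ≤ (1 - exp (-u * ‖ξ‖ ^ 2)) ^ β := rpow_nonneg (by linarith) _
      linarith
    have hge : 0 ≤ (P M).eval (exp (-u * ‖ξ‖ ^ 2)) := by
      rw [heval]
      exact Finset.sum_nonneg fun k _ => mul_nonneg (hc0 k) (by positivity)
    rw [Polynomial.eval_pow, abs_of_nonneg (by positivity)]
    exact pow_le_one₀ hge hle
  · filter_upwards [hne] with ξ hξ
    have hlt := hz ξ hξ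
    have hpos := Real.exp_pos (-u * ‖ξ‖ ^ 2)
    have hs := (hasSum_one_sub_one_sub_rpow β (by rwa [abs_of_pos hpos])).tendsto_sum_nat
    simp only [Polynomial.eval_pow, heval]
    exact hs.pow N

theorem tendsto_one_sub_one_sub_exp_rpow_pow {β : ℝ} (h0 : 0 < β) {t : ℝ} (ht : 0 < t) {s : ℝ}
    (hs : 0 ≤ s) :
    Tendsto (fun N : ℕ => (1 - (1 - exp (-(t / N) ^ (1 / β) * s)) ^ β) ^ N) atTop
      (𝓝 (exp (-(t * s ^ β)))) := by
  have hu : Tendsto (fun N : ℕ => (t / N) ^ (1 / β)) atTop (𝓝[>] 0) := by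
    refine tendsto_nhdsWithin_iff.2 ⟨?_, ?_⟩
    · have := (tendsto_const_div_atTop_nhds_zero_nat t).rpow_const (p := 1 / β)
        (Or.inr (by positivity))
      rwa [Real.zero_rpow (by positivity)] at this
    · filter_upwards [eventually_gt_atTop 0] with N hN
      have : (0 : ℝ) < N := by exact_mod_cast hN
      exact Set.mem_Ioi.2 (by positivity)
  have hd : Tendsto (fun u : ℝ => (1 - exp (-u * s)) / u) (𝓝[>] 0) (𝓝 s) := by
    have h1 : HasDerivAt (fun u : ℝ => 1 - exp (-u * s)) s 0 := by
      have := (((hasDerivAt_id (0 : ℝ)).neg.mul_const s).exp).const_sub 1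
      simpa using this
    have := h1.tendsto_slope_zero_right
    simpa [div_eq_inv_mul] using this
  have hlim := ((hd.comp hu).rpow_const (p := β) (Or.inr h0.le)).const_mul t
  have key := Real.tendsto_one_add_pow_exp_of_tendsto
    (g := fun N : ℕ => -(1 - exp (-(t / N) ^ (1 / β) * s)) ^ β) (t := -(t * s ^ β)) ?_
  · simpa [sub_eq_add_neg] using key
  · refine hlim.neg.congr' ?_
    filter_upwards [eventually_gt_atTop 0] with N hN
    have hN : (0 : ℝ) < N := by exact_mod_cast hN
    have hu0 : 0 < (t / N) ^ (1 / β) := by positivity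
    have hnn : 0 ≤ 1 - exp (-(t / N) ^ (1 / β) * s) := by
      rw [sub_nonneg, Real.exp_le_one_iff]
      have : 0 ≤ (t / N) ^ (1 / β) * s := by positivity
      linarith
    simp only [Function.comp]
    rw [Real.div_rpow hnn hu0.le, ← Real.rpow_mul (by positivity), one_div_mul_cancel h0.ne',
      Real.rpow_one]
    field_simp

theorem gaussianPositive_exp_neg_norm_rpow [Nontrivial V] {α : ℝ} (hα : 0 < α) (hα2 : α ≤ 2)
    {t : ℝ} (ht : 0 < t) : GaussianPositive fun ξ : V => exp (-(t * ‖ξ‖ ^ α)) := by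
  have hpow : ∀ ξ : V, (‖ξ‖ ^ 2) ^ (α / 2) = ‖ξ‖ ^ α := by
    intro ξ
    rw [← Real.rpow_natCast, ← Real.rpow_mul (norm_nonneg _)]
    congr 1; push_cast; ring
  refine GaussianPositive.of_tendsto
    (φ := fun N ξ => (1 - (1 - exp (-(t / (N + 1 : ℕ)) ^ (1 / (α / 2)) * ‖ξ‖ ^ 2)) ^ (α / 2)) ^
      (N + 1))
    (fun N => gaussianPositive_one_sub_rpow_pow (by positivity) (by linarith) (by positivity) _)
    (fun N => ?_) (fun N => ae_of_all _ fun ξ => ?_) (ae_of_all _ fun ξ => ?_)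
  · fun_prop
  · have hle : exp (-(t / (N + 1 : ℕ)) ^ (1 / (α / 2)) * ‖ξ‖ ^ 2) ≤ 1 := by
      rw [Real.exp_le_one_iff]
      have : 0 ≤ (t / (N + 1 : ℕ)) ^ (1 / (α / 2)) * ‖ξ‖ ^ 2 := by positivity
      linarith
    have hpos := Real.exp_pos (-(t / (N + 1 : ℕ)) ^ (1 / (α / 2)) * ‖ξ‖ ^ 2)
    have h1 : 0 ≤ (1 - exp (-(t / (N + 1 : ℕ)) ^ (1 / (α / 2)) * ‖ξ‖ ^ 2)) ^ (α / 2) :=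
      Real.rpow_nonneg (by linarith) _
    have h2 : (1 - exp (-(t / (N + 1 : ℕ)) ^ (1 / (α / 2)) * ‖ξ‖ ^ 2)) ^ (α / 2) ≤ 1 :=
      Real.rpow_le_one (by linarith) (by linarith) (by positivity)
    rw [abs_of_nonneg (pow_nonneg (by linarith) _)]
    exact pow_le_one₀ (by linarith) (by linarith)
  · have := (tendsto_one_sub_one_sub_exp_rpow_pow (β := α / 2) (by positivity) ht
      (s := ‖ξ‖ ^ 2) (by positivity)).comp (tendsto_add_atTop_nat 1)
    rw [hpow] at this
    exact this

theorem integrable_exp_neg_norm_rpow [Nontrivial V] {α : ℝ} (hα : 0 < α) {t : ℝ} (ht : 0 < t) :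
    Integrable fun ξ : V => exp (-(t * ‖ξ‖ ^ α)) := by
  refine (integrable_fun_norm_addHaar (volume : Measure V)
    (f := fun y : ℝ => exp (-(t * y ^ α)))).2 ?_
  have := integrableOn_rpow_mul_exp_neg_mul_rpow (p := α)
    (s := ((Module.finrank ℝ V - 1 : ℕ) : ℝ)) (b := t)
    (lt_of_lt_of_le (by norm_num) (Nat.cast_nonneg _)) hα ht
  simpa [Real.rpow_natCast] using this

theorem integral_cos_mul_exp_neg_norm_rpow_nonneg [Nontrivial V] {α : ℝ} (hα : 0 < α)
    (hα2 : α ≤ 2) {t : ℝ} (ht : 0 < t) (x : V) :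
    0 ≤ ∫ ξ : V, cos ⟪x, ξ⟫ * exp (-(t * ‖ξ‖ ^ α)) := by
  have hδ : Tendsto (fun j : ℕ => 1 / ((j : ℝ) + 1)) atTop (𝓝 0) :=
    tendsto_one_div_add_atTop_nhds_zero_nat
  refine ge_of_tendsto' (tendsto_integral_of_dominated_convergence
    (F := fun (j : ℕ) ξ => cos ⟪x, ξ⟫ * exp (-(t * ‖ξ‖ ^ α)) * exp (-(1 / ((j : ℝ) + 1)) * ‖ξ‖ ^ 2))
    (fun ξ : V => exp (-(t * ‖ξ‖ ^ α))) ?_ (integrable_exp_neg_norm_rpow hα ht) ?_ ?_)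
    fun j => gaussianPositive_exp_neg_norm_rpow hα hα2 ht _ (by positivity) x
  · intro j
    exact Measurable.aestronglyMeasurable (by fun_prop)
  · refine fun j => ae_of_all _ fun ξ => ?_
    rw [norm_mul, norm_mul, Real.norm_eq_abs, Real.norm_eq_abs, Real.norm_eq_abs, Real.abs_exp,
      Real.abs_exp]
    have h1 := Real.abs_cos_le_one ⟪x, ξ⟫
    have h2 : exp (-(1 / ((j : ℝ) + 1)) * ‖ξ‖ ^ 2) ≤ 1 := by
      rw [Real.exp_le_one_iff]
      have : 0 ≤ (1 / ((j : ℝ) + 1)) * ‖ξ‖ ^ 2 := by positivity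
      linarith
    calc _ ≤ 1 * exp (-(t * ‖ξ‖ ^ α)) * 1 := by gcongr
      _ = _ := by ring
  · refine ae_of_all _ fun ξ => ?_
    have h : Tendsto (fun j : ℕ => exp (-(1 / ((j : ℝ) + 1)) * ‖ξ‖ ^ 2)) atTop (𝓝 1) := by
      have := (hδ.neg.mul_const (‖ξ‖ ^ 2)).rexp
      simpa using this
    simpa using h.const_mul (cos ⟪x, ξ⟫ * exp (-(t * ‖ξ‖ ^ α)))

end PositiveDefinite

section StableMeasure

theorem integrable_fourier_of_nonneg {V : Type*} [NormedAddCommGroup V] [InnerProductSpace ℝ V]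
    [FiniteDimensional ℝ V] [MeasurableSpace V] [BorelSpace V] {f : V → ℂ} (hf : Integrable f)
    (hc : ContinuousAt f 0) {G : V → ℝ} (hGc : Continuous G) (hG0 : ∀ w, 0 ≤ G w)
    (hG : ∀ w, 𝓕 f w = G w) : Integrable G := by
  have hA : Tendsto (fun c : ℝ => ∫ w : V, Complex.exp (-(c : ℂ)⁻¹ * ‖w‖ ^ 2) • 𝓕 f w) atTop
      (𝓝 (f 0)) := by
    refine (Real.tendsto_integral_gaussian_smul' hf hc).congr' ?_
    filter_upwards [Ioi_mem_atTop 0] with c (hc : 0 < c)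
    have J : Integrable fun w : V => Complex.exp (-(c : ℂ)⁻¹ * ‖w‖ ^ 2) := by
      simpa using GaussianFourier.integrable_cexp_neg_mul_sq_norm_add (V := V) (b := (c : ℂ)⁻¹)
        (by rw [← Complex.ofReal_inv]; simpa using hc) 0 0
    have h := VectorFourier.integral_fourierIntegral_smul_eq_flip (L := innerₗ V)
      Real.continuous_fourierChar continuous_inner J hf
    have h' : ∫ w, 𝓕 (fun w : V => Complex.exp (-(c : ℂ)⁻¹ * ‖w‖ ^ 2)) w • f w =
        ∫ w : V, Complex.exp (-(c : ℂ)⁻¹ * ‖w‖ ^ 2) • 𝓕 f w := by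
      simpa using! h
    rw [← h']
    refine integral_congr_ae (ae_of_all _ fun w => ?_)
    simp only
    rw [fourier_gaussian_innerProductSpace (by rw [← Complex.ofReal_inv]; simpa using hc)]
    congr 1
    congr 1
    · simp
    · congr 1
      simp
      ring
  have hre : ∀ c : ℝ, ∫ w : V, Complex.exp (-(c : ℂ)⁻¹ * ‖w‖ ^ 2) • 𝓕 f w =
      ((∫ w : V, exp (-c⁻¹ * ‖w‖ ^ 2) * G w : ℝ) : ℂ) := by
    intro c
    rw [← integral_complex_ofReal]
    refine integral_congr_ae (ae_of_all _ fun w => ?_)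
    simp [hG]
  simp only [hre] at hA
  have hB : Tendsto (fun c : ℝ => ∫ w : V, exp (-c⁻¹ * ‖w‖ ^ 2) * G w) atTop (𝓝 (f 0).re) := by
    simpa [Function.comp_def] using (Complex.continuous_re.tendsto _).comp hA
  have hbound : ∀ w, ‖G w‖ ≤ ∫ v, ‖f v‖ := fun w => by
    have := VectorFourier.norm_fourierIntegral_le_integral_norm 𝐞 volume (innerₗ V) f w
    have h2 : ‖𝓕 f w‖ ≤ ∫ v, ‖f v‖ := this
    simpa [hG] using h2
  have hInt : ∀ j : ℕ, Integrable fun w : V => exp (-((j : ℝ) + 1)⁻¹ * ‖w‖ ^ 2) * G w := fun j =>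
    (integrable_gaussian (V := V) (b := ((j : ℝ) + 1)⁻¹) (by positivity)).mul_bdd
      hGc.aestronglyMeasurable (ae_of_all _ hbound)
  have hcast : Tendsto (fun j : ℕ => (j : ℝ) + 1) atTop atTop :=
    tendsto_atTop_add_const_right _ _ tendsto_natCast_atTop_atTop
  have hC : Tendsto (fun j : ℕ => ∫⁻ w : V, ENNReal.ofReal (exp (-((j : ℝ) + 1)⁻¹ * ‖w‖ ^ 2) * G w))
      atTop (𝓝 (ENNReal.ofReal (f 0).re)) := by
    refine (ENNReal.tendsto_ofReal (hB.comp hcast)).congr fun j => ?_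
    exact ofReal_integral_eq_lintegral_ofReal (hInt j)
      (ae_of_all _ fun w => mul_nonneg (exp_pos _).le (hG0 w))
  have hfatou := lintegral_liminf_le (μ := (volume : Measure V)) (u := atTop)
    (f := fun (j : ℕ) w => ENNReal.ofReal (exp (-((j : ℝ) + 1)⁻¹ * ‖w‖ ^ 2) * G w))
    (fun j => by have := hGc.measurable; fun_prop)
  rw [hC.liminf_eq] at hfatou
  have hlim : ∀ w : V, liminf (fun j : ℕ =>
      ENNReal.ofReal (exp (-((j : ℝ) + 1)⁻¹ * ‖w‖ ^ 2) * G w)) atTop = ENNReal.ofReal (G w) := by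
    intro w
    refine Tendsto.liminf_eq (ENNReal.tendsto_ofReal ?_)
    have := (((tendsto_inv_atTop_zero.comp hcast).neg.mul_const (‖w‖ ^ 2)).rexp).mul_const (G w)
    simpa using this
  simp only [hlim] at hfatou
  refine ⟨hGc.aestronglyMeasurable, ?_⟩
  rw [hasFiniteIntegral_iff_ofReal (ae_of_all _ hG0)]
  exact hfatou.trans_lt ENNReal.ofReal_lt_top

variable {n : ℕ}

/-- The cosine transform of `exp (-t ‖ξ‖ ^ α)`. -/
noncomputable def stableCosTransform (n : ℕ) (α t : ℝ) (x : EuclideanSpace ℝ (Fin n)) : ℝ :=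
  ∫ ξ : EuclideanSpace ℝ (Fin n), cos ⟪x, ξ⟫ * exp (-(t * ‖ξ‖ ^ α))

theorem stableKernel_eq (α t : ℝ) (x : EuclideanSpace ℝ (Fin n)) :
    stableKernel n α t x = (2 * π) ^ (-(n : ℝ)) * stableCosTransform n α t x := by
  unfold stableKernel stableCosTransform
  congr 1
  refine integral_congr_ae (ae_of_all _ fun ξ => ?_)
  simp only
  rw [sub_eq_add_neg, add_comm, Complex.exp_add, ← Complex.ofReal_neg, ← Complex.ofReal_exp,
    Complex.re_ofReal_mul]
  rw [Complex.exp_ofReal_mul_I_re, mul_comm]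

theorem stableKernel_neg (α t : ℝ) (x : EuclideanSpace ℝ (Fin n)) :
    stableKernel n α t (-x) = stableKernel n α t x := by
  simp [stableKernel_eq, stableCosTransform]

variable [NeZero n] {α t : ℝ}

theorem stableKernel_nonneg (hα : 0 < α) (hα2 : α ≤ 2) (ht : 0 < t)
    (x : EuclideanSpace ℝ (Fin n)) : 0 ≤ stableKernel n α t x := by
  rw [stableKernel_eq]
  exact mul_nonneg (by positivity) (integral_cos_mul_exp_neg_norm_rpow_nonneg hα hα2 ht x)

theorem continuous_stableCosTransform (hα : 0 < α) (ht : 0 < t) :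
    Continuous (stableCosTransform n α t) := by
  refine continuous_of_dominated (bound := fun ξ => exp (-(t * ‖ξ‖ ^ α))) (fun x => ?_)
    (fun x => ae_of_all _ fun ξ => ?_) (integrable_exp_neg_norm_rpow hα ht)
    (ae_of_all _ fun ξ => ?_)
  · exact Measurable.aestronglyMeasurable (by fun_prop)
  · rw [norm_mul, Real.norm_eq_abs, Real.norm_eq_abs, Real.abs_exp]
    exact mul_le_of_le_one_left (exp_pos _).le (Real.abs_cos_le_one _)
  · fun_prop

theorem continuous_stableKernel (hα : 0 < α) (ht : 0 < t) : Continuous (stableKernel n α t) := by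
  have : stableKernel n α t = fun x => (2 * π) ^ (-(n : ℝ)) * stableCosTransform n α t x :=
    funext (stableKernel_eq α t)
  rw [this]
  exact (continuous_stableCosTransform hα ht).const_mul _

theorem fourier_exp_neg_norm_rpow (hα : 0 < α) (ht : 0 < t) (w : EuclideanSpace ℝ (Fin n)) :
    𝓕 (fun ξ : EuclideanSpace ℝ (Fin n) => ((exp (-(t * ‖ξ‖ ^ α)) : ℝ) : ℂ)) w =
      (stableCosTransform n α t ((2 * π) • w) : ℂ) := by
  rw [Real.fourier_eq']
  set F : EuclideanSpace ℝ (Fin n) → ℂ := fun ξ =>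
    Complex.exp (((-2 * π * ⟪ξ, w⟫ : ℝ) : ℂ) * Complex.I) • ((exp (-(t * ‖ξ‖ ^ α)) : ℝ) : ℂ)
    with hF
  have hFint : Integrable F := by
    refine (integrable_exp_neg_norm_rpow hα ht).ofReal.bdd_mul (c := 1)
      (Measurable.aestronglyMeasurable (by fun_prop)) (ae_of_all _ fun ξ => ?_)
    rw [Complex.norm_exp_ofReal_mul_I]
  have hconj : (starRingEnd ℂ) (∫ ξ, F ξ) = ∫ ξ, F ξ := by
    rw [← integral_conj, ← integral_neg_eq_self]
    refine integral_congr_ae (ae_of_all _ fun ξ => ?_)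
    simp [hF, ← Complex.exp_conj, Complex.conj_ofNat]
  rw [← Complex.conj_eq_iff_re.1 hconj]
  congr 1
  rw [← Complex.reCLM_apply, ← Complex.reCLM.integral_comp_comm hFint]
  refine integral_congr_ae (ae_of_all _ fun ξ => ?_)
  simp only [hF, Complex.reCLM_apply, smul_eq_mul]
  rw [Complex.re_mul_ofReal, Complex.exp_ofReal_mul_I_re, real_inner_smul_left,
    real_inner_comm, ← Real.cos_neg]
  congr 2
  ring

theorem integrable_stableCosTransform (hα : 0 < α) (hα2 : α ≤ 2) (ht : 0 < t) :
    Integrable fun w : EuclideanSpace ℝ (Fin n) => stableCosTransform n α t ((2 * π) • w) := by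
  refine integrable_fourier_of_nonneg
    (integrable_exp_neg_norm_rpow hα ht).ofReal ?_
    ((continuous_stableCosTransform hα ht).comp (by fun_prop))
    (fun w => integral_cos_mul_exp_neg_norm_rpow_nonneg hα hα2 ht _)
    (fourier_exp_neg_norm_rpow hα ht)
  have : Continuous fun ξ : EuclideanSpace ℝ (Fin n) => ‖ξ‖ ^ α :=
    continuous_norm.rpow_const fun _ => Or.inr hα.le
  exact Continuous.continuousAt (by fun_prop)

theorem integral_cexp_mul_stableKernel (hα : 0 < α) (hα2 : α ≤ 2) (ht : 0 < t)
    (ξ : EuclideanSpace ℝ (Fin n)) :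
    ∫ x, (stableKernel n α t x : ℂ) * Complex.exp (⟪x, ξ⟫ * Complex.I) =
      (exp (-(t * ‖ξ‖ ^ α)) : ℝ) := by
  set f : EuclideanSpace ℝ (Fin n) → ℂ := fun ξ => ((exp (-(t * ‖ξ‖ ^ α)) : ℝ) : ℂ) with hf
  have hcont : Continuous f := by
    have : Continuous fun ξ : EuclideanSpace ℝ (Fin n) => ‖ξ‖ ^ α :=
      continuous_norm.rpow_const fun _ => Or.inr hα.le
    fun_prop
  have hFf : 𝓕 f = fun w => (stableCosTransform n α t ((2 * π) • w) : ℂ) :=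
    funext (fourier_exp_neg_norm_rpow hα ht)
  have hinv := congrFun (hcont.fourierInv_fourier_eq (integrable_exp_neg_norm_rpow hα ht).ofReal
    (by rw [hFf]; exact (integrable_stableCosTransform hα hα2 ht).ofReal)) ξ
  rw [hFf, Real.fourierInv_eq'] at hinv
  rw [show ((exp (-(t * ‖ξ‖ ^ α)) : ℝ) : ℂ) = f ξ from rfl, ← hinv]
  have hsub := Measure.integral_comp_smul (volume : Measure (EuclideanSpace ℝ (Fin n)))
    (fun x => Complex.exp (⟪x, ξ⟫ * Complex.I) * (stableCosTransform n α t x : ℂ)) (2 * π)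
  have hL : ∀ v : EuclideanSpace ℝ (Fin n),
      Complex.exp (((2 * π * ⟪v, ξ⟫ : ℝ) : ℂ) * Complex.I) •
        (stableCosTransform n α t ((2 * π) • v) : ℂ) =
      Complex.exp (⟪(2 * π) • v, ξ⟫ * Complex.I) *
        (stableCosTransform n α t ((2 * π) • v) : ℂ) := by
    intro v
    rw [real_inner_smul_left, smul_eq_mul]
  simp only [hL]
  rw [hsub, finrank_euclideanSpace_fin, abs_of_pos (by positivity), ← integral_smul]
  refine integral_congr_ae (ae_of_all _ fun x => ?_)
  simp only [stableKernel_eq, Complex.real_smul]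
  rw [Real.rpow_neg (by positivity), Real.rpow_natCast, Complex.ofReal_mul]
  ring

/-- The law with density `stableKernel n α t`. -/
noncomputable def stableMeasure (n : ℕ) (α t : ℝ) : Measure (EuclideanSpace ℝ (Fin n)) :=
  volume.withDensity fun x => ENNReal.ofReal (stableKernel n α t x)

theorem integral_stableMeasure {F : Type*} [NormedAddCommGroup F] [NormedSpace ℝ F]
    (hα : 0 < α) (hα2 : α ≤ 2) (ht : 0 < t) (g : EuclideanSpace ℝ (Fin n) → F) :
    ∫ x, g x ∂stableMeasure n α t = ∫ x, stableKernel n α t x • g x := by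
  rw [stableMeasure, integral_withDensity_eq_integral_toReal_smul
    (continuous_stableKernel hα ht).measurable.ennreal_ofReal
    (ae_of_all _ fun _ => ENNReal.ofReal_lt_top)]
  simp only [ENNReal.toReal_ofReal (stableKernel_nonneg hα hα2 ht _)]

theorem charFun_stableMeasure (hα : 0 < α) (hα2 : α ≤ 2) (ht : 0 < t)
    (ξ : EuclideanSpace ℝ (Fin n)) :
    charFun (stableMeasure n α t) ξ = (exp (-(t * ‖ξ‖ ^ α)) : ℝ) := by
  rw [charFun_apply, integral_stableMeasure hα hα2 ht, ← integral_cexp_mul_stableKernel hα hα2 ht]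
  simp only [Complex.real_smul]

theorem isProbabilityMeasure_stableMeasure (hα : 0 < α) (hα2 : α ≤ 2) (ht : 0 < t) :
    IsProbabilityMeasure (stableMeasure n α t) := by
  have h := charFun_stableMeasure (n := n) hα hα2 ht 0
  rw [charFun_zero, norm_zero, Real.zero_rpow hα.ne'] at h
  have h' : (stableMeasure n α t).real Set.univ = 1 := by
    rw [mul_zero, neg_zero, Real.exp_zero] at h
    exact_mod_cast h
  constructor
  rwa [measureReal_def, ENNReal.toReal_eq_one_iff] at h'

theorem stableMeasure_conv (hα : 0 < α) (hα2 : α ≤ 2) {s : ℝ} (hs : 0 < s) (ht : 0 < t) :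
    stableMeasure n α s ∗ stableMeasure n α t = stableMeasure n α (s + t) := by
  have := isProbabilityMeasure_stableMeasure (n := n) hα hα2 hs
  have := isProbabilityMeasure_stableMeasure (n := n) hα hα2 ht
  have := isProbabilityMeasure_stableMeasure (n := n) hα hα2 (add_pos hs ht)
  refine Measure.ext_of_charFun (funext fun ξ => ?_)
  rw [charFun_conv, charFun_stableMeasure hα hα2 hs, charFun_stableMeasure hα hα2 ht,
    charFun_stableMeasure hα hα2 (add_pos hs ht), ← Complex.ofReal_mul, ← Real.exp_add]
  congr 2
  ring

theorem map_smul_stableMeasure (hα : 0 < α) (hα2 : α ≤ 2) (ht : 0 < t) {c : ℝ} (hc : 0 < c) :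
    (stableMeasure n α t).map (c • ·) = stableMeasure n α (c ^ α * t) := by
  have hct : 0 < c ^ α * t := by positivity
  have := isProbabilityMeasure_stableMeasure (n := n) hα hα2 ht
  have := isProbabilityMeasure_stableMeasure (n := n) hα hα2 hct
  refine Measure.ext_of_charFun (funext fun ξ => ?_)
  rw [charFun_map_smul, charFun_stableMeasure hα hα2 ht, charFun_stableMeasure hα hα2 hct,
    norm_smul, Real.norm_of_nonneg hc.le, Real.mul_rpow hc.le (norm_nonneg _)]
  congr 3
  ring

theorem stableSemigroup_eq (hα : 0 < α) (hα2 : α ≤ 2) (ht : 0 < t)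
    (f : EuclideanSpace ℝ (Fin n) → ℝ) (x : EuclideanSpace ℝ (Fin n)) :
    stableSemigroup n α t f x = ∫ y, f (x + y) ∂stableMeasure n α t := by
  rw [stableSemigroup, if_neg ht.ne', integral_stableMeasure hα hα2 ht,
    ← integral_add_left_eq_self _ x]
  refine integral_congr_ae (ae_of_all _ fun y => ?_)
  simp [stableKernel_neg]

end StableMeasure

section RealPowerMean

variable {E : Type*} [MeasurableSpace E]

theorem integrable_of_mem_Icc {ν : Measure E} [IsFiniteMeasure ν] {h : E → ℝ} (hh : Measurable h)
    {a b : ℝ} (hab : ∀ x, h x ∈ Set.Icc a b) : Integrable h ν :=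
  Integrable.of_mem_Icc a b hh.aemeasurable (ae_of_all _ hab)

theorem integral_mem_Icc {ν : Measure E} [IsProbabilityMeasure ν] {h : E → ℝ}
    (hh : Measurable h) {a b : ℝ} (hab : ∀ x, h x ∈ Set.Icc a b) : ∫ x, h x ∂ν ∈ Set.Icc a b := by
  have hi := integrable_of_mem_Icc (ν := ν) hh hab
  constructor
  · simpa using integral_mono (integrable_const a) hi fun x => (hab x).1
  · simpa using integral_mono hi (integrable_const b) fun x => (hab x).2

theorem rpow_mem_Icc {a b x q : ℝ} (ha : 0 < a) (hx : x ∈ Set.Icc a b) (hq : 0 ≤ q) :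
    x ^ q ∈ Set.Icc (a ^ q) (b ^ q) :=
  ⟨rpow_le_rpow ha.le hx.1 hq, rpow_le_rpow (ha.le.trans hx.1) hx.2 hq⟩

theorem powerMean_ofReal [AddCommGroup E] {ν : Measure E} [IsProbabilityMeasure ν] {h : E → ℝ}
    (hh : Measurable h) [MeasurableAdd E] {a b : ℝ} (ha : 0 < a) (hab : ∀ x, h x ∈ Set.Icc a b)
    {q : ℝ} (hq : 0 < q) (x : E) :
    powerMean ν q (fun y => ENNReal.ofReal (h y)) x =
      ENNReal.ofReal ((∫ y, h (x + y) ^ q ∂ν) ^ (1 / q)) := by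
  have hpos : ∀ y, 0 < h y := fun y => ha.trans_le (hab y).1
  have hInt : Integrable (fun y => h (x + y) ^ q) ν :=
    integrable_of_mem_Icc ((hh.comp (measurable_const_add x)).pow_const q)
      fun y => rpow_mem_Icc ha (hab (x + y)) hq.le
  rw [powerMean, ← ENNReal.ofReal_rpow_of_nonneg
    (integral_nonneg fun y => rpow_nonneg (hpos _).le _) (by positivity),
    ofReal_integral_eq_lintegral_ofReal hInt
      (ae_of_all _ fun y => rpow_nonneg (hpos _).le _)]
  simp only [ENNReal.ofReal_rpow_of_pos (hpos _)]

theorem continuousAt_integral_rpow_rpow {ν : Measure E} [IsProbabilityMeasure ν] {h : E → ℝ}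
    (hh : Measurable h) {a b : ℝ} (ha : 0 < a) (hab : ∀ x, h x ∈ Set.Icc a b)
    {q : ℝ} (hq : 0 < q) :
    ContinuousAt (fun q => (∫ y, h y ^ q ∂ν) ^ (1 / q)) q := by
  have hpos : ∀ y, 0 < h y := fun y => ha.trans_le (hab y).1
  have hJ : ContinuousAt (fun q => ∫ y, h y ^ q ∂ν) q := by
    refine continuousAt_of_dominated (bound := fun _ => max 1 b ^ (q + 1))
      (Eventually.of_forall fun p => (hh.pow_const p).aestronglyMeasurable) ?_
      (integrable_const _) (ae_of_all _ fun y => ?_)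
    · filter_upwards [Ioo_mem_nhds hq (lt_add_one q)] with p hp
      refine ae_of_all _ fun y => ?_
      rw [norm_of_nonneg (rpow_nonneg (hpos y).le _)]
      exact (rpow_le_rpow (hpos y).le ((hab y).2.trans (le_max_right 1 b)) hp.1.le).trans
        (rpow_le_rpow_of_exponent_le (le_max_left 1 b) hp.2.le)
    · exact continuousAt_const_rpow (hpos y).ne'
  have hJpos : 0 < ∫ y, h y ^ q ∂ν :=
    (rpow_pos_of_pos ha q).trans_le (integral_mem_Icc (hh.pow_const q)
      fun y => rpow_mem_Icc ha (hab y) hq.le).1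
  exact hJ.rpow (continuousAt_const.div continuousAt_id hq.ne') (Or.inl hJpos.ne')

theorem integral_rpow_le_of_convolution_semigroup {E : Type*} [AddCommGroup E] [MeasurableSpace E]
    [MeasurableAdd₂ E] {μ : ℝ → Measure E} (hprob : ∀ t > 0, IsProbabilityMeasure (μ t))
    (hconv : ∀ s > 0, ∀ t > 0, μ s ∗ μ t = μ (s + t)) {r T : ℝ} (hr : 0 < r) (hrT : r < T)
    {q₁ q₂ : ℝ} (hq₁ : 0 < q₁) (hq₁1 : q₁ < 1) (hq₂ : 0 < q₂)
    (hrel : T * (1 / q₁ - 1) = r * (1 / q₂ - 1)) {f : E → ℝ} (hf : Measurable f) {a b : ℝ}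
    (ha : 0 < a) (hab : ∀ x, f x ∈ Set.Icc a b) :
    (∫ x, f x ^ q₁ ∂μ T) ^ (1 / q₁) ≤
      (∫ x, (∫ y, f (x + y) ∂μ (T - r)) ^ q₂ ∂μ r) ^ (1 / q₂) := by
  have hT : 0 < T := hr.trans hrT
  have := hprob r hr
  have := hprob T hT
  have := hprob (T - r) (sub_pos.2 hrT)
  set g : E → ℝ := fun x => ∫ y, f (x + y) ∂μ (T - r) with hg
  have hgm : Measurable g :=
    ((hf.comp measurable_add).stronglyMeasurable.integral_prod_right').measurable
  have hgab : ∀ x, g x ∈ Set.Icc a b := fun x =>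
    integral_mem_Icc (hf.comp (measurable_const_add x)) fun y => hab (x + y)
  have hpm : powerMean (μ (T - r)) 1 (fun y => ENNReal.ofReal (f y)) =
      fun x => ENNReal.ofReal (g x) := by
    funext x
    rw [powerMean_ofReal hf ha hab one_pos]
    simp [hg]
  have hd : 0 < 1 / q₁ - 1 := by
    rw [sub_pos, lt_div_iff₀ hq₁]; linarith
  set φ : ℝ → ℝ := fun ρ => 1 / (1 + (1 / q₁ - 1) / ρ) with hφ
  have hρ₀ : 0 < r / T := by positivity
  have hφ₀ : φ (r / T) = q₂ := by
    have : 1 + (1 / q₁ - 1) / (r / T) = 1 / q₂ := by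
      rw [div_div_eq_mul_div, mul_comm, hrel, mul_div_cancel_left₀ _ hr.ne']
      ring
    simp only [hφ, this, one_div_one_div]
  have hcont : ContinuousAt (fun ρ => (∫ x, g x ^ φ ρ ∂μ r) ^ (1 / φ ρ)) (r / T) := by
    have hφc : ContinuousAt φ (r / T) :=
      continuousAt_const.div
        (continuousAt_const.add (continuousAt_const.div continuousAt_id hρ₀.ne')) (by positivity)
    exact ContinuousAt.comp (g := fun q => (∫ x, g x ^ q ∂μ r) ^ (1 / q))
      (continuousAt_integral_rpow_rpow hgm ha hgab (by rwa [hφ₀])) hφc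
  by_contra! hlt
  have hev : ∀ᶠ ρ in 𝓝 (r / T), (∫ x, g x ^ φ ρ ∂μ r) ^ (1 / φ ρ) <
      (∫ x, f x ^ q₁ ∂μ T) ^ (1 / q₁) :=
    hcont.eventually_lt_const (by simpa only [hφ₀] using hlt)
  have hρ₁ : r / T < 1 := (div_lt_one hT).2 hrT
  obtain ⟨u, hu, hsub⟩ := exists_Ico_subset_of_mem_nhds' hev hρ₁
  obtain ⟨ρ, hρl, hρu⟩ := exists_rat_btwn hu.1
  refine (Set.mem_ofPred.1 (hsub ⟨hρl.le, hρu⟩)).not_ge ?_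
  have hρpos : 0 < ρ := by exact_mod_cast hρ₀.trans hρl
  have hρlt : ρ < 1 := by exact_mod_cast hρu.trans_le hu.2
  obtain ⟨k, hk⟩ := Int.eq_ofNat_of_zero_le (Rat.num_pos.2 hρpos).le
  have hm : (0 : ℝ) < ρ.den := by exact_mod_cast ρ.den_pos
  have hρk : (ρ : ℝ) = k / ρ.den := by
    rw [Rat.cast_def, hk]; simp
  have hk0 : (0 : ℝ) < k := by
    have : (0 : ℝ) < k / ρ.den := by rw [← hρk]; exact_mod_cast hρpos
    exact (div_pos_iff_of_pos_right hm).1 this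
  have hkm : k < ρ.den := by
    have : (k / ρ.den : ℝ) < 1 := by rw [← hρk]; exact_mod_cast hρlt
    exact_mod_cast (div_lt_one hm).1 this
  have hρR : (0 : ℝ) < ρ := by exact_mod_cast hρpos
  have hq : 0 < φ ρ := by simp only [hφ]; positivity
  have hmain := powerMean_le_of_le_nat_ratio hprob hconv hr (T := T) hkm (q₁ := q₁) (q := φ ρ)
    (by
      rw [hρk, div_lt_div_iff₀ hT hm] at hρl
      rw [← mul_div_assoc, lt_div_iff₀ hm]; exact hρl)
    hq₁ hq (div_le_one_of_le₀ (by linarith [div_pos hd hρR]) (by positivity))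
    (by
      simp only [hφ, one_div_one_div, hρk]
      field_simp
      ring)
    hf.ennreal_ofReal (ENNReal.ofReal_ne_top (r := b))
    (fun x => ENNReal.ofReal_le_ofReal (hab x).2) 0
  rw [hpm, powerMean_ofReal hf ha hab hq₁, powerMean_ofReal hgm ha hgab hq] at hmain
  simp only [zero_add] at hmain
  exact (ENNReal.ofReal_le_ofReal_iff (rpow_nonneg (integral_nonneg fun x =>
    rpow_nonneg (ha.le.trans (hgab x).1) _) _)).1 hmain

end RealPowerMean

theorem reverse_hypercontractivity_levy_OU (n : ℕ) (hn : 1 ≤ n)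
    (α : ℝ) (hα : 0 < α) (hα2 : α ≤ 2) (t : ℝ) (ht : 0 ≤ t)
    (q₁ q₂ : ℝ) (hq₂ : 0 < q₂) (hq : q₂ ≤ q₁) (hq₁ : q₁ < 1)
    (hrel : q₂ - 1 = (q₂ / q₁) * (q₁ - 1) * Real.exp (α * t))
    (f : EuclideanSpace ℝ (Fin n) → ℝ) (hf : Measurable f)
    (a b : ℝ) (ha : 0 < a) (hab : ∀ x, a ≤ f x ∧ f x ≤ b) :
    (∫ x, f x ^ q₁ * stableKernel n α (1 / α) x) ^ (1 / q₁) ≤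
      (∫ x, LOU n α t f x ^ q₂ * stableKernel n α (1 / α) x) ^ (1 / q₂) := by
  have : NeZero n := ⟨by omega⟩
  have hq₁0 : 0 < q₁ := hq₂.trans_le hq
  have hrel' : (1 / q₁ - 1) * exp (α * t) = 1 / q₂ - 1 := by
    field_simp at hrel ⊢
    linarith
  rcases ht.eq_or_lt with rfl | ht
  · have hqq : q₁ = q₂ := by simpa using hrel'
    subst hqq
    simp [LOU, stableSemigroup]
  have hT : 0 < 1 / α := by positivity
  have hct : exp (-t) ^ α * (1 / α) = exp (-α * t) / α := by
    rw [← exp_mul, mul_one_div]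
    ring_nf
  have hr : 0 < exp (-α * t) / α := by positivity
  have hrT : exp (-α * t) / α < 1 / α := by
    refine div_lt_div_of_pos_right (Real.exp_lt_one_iff.2 ?_) hα
    nlinarith
  have hs : 1 / α - exp (-α * t) / α = (1 - exp (-α * t)) / α := by ring
  have hL : stableSemigroup n α ((1 - exp (-α * t)) / α) f =
      fun x => ∫ y, f (x + y) ∂stableMeasure n α (1 / α - exp (-α * t) / α) := by
    funext x
    rw [← hs, stableSemigroup_eq hα hα2 (sub_pos.2 hrT)]
  have := isProbabilityMeasure_stableMeasure (n := n) hα hα2 (sub_pos.2 hrT)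
  have hgm : Measurable (stableSemigroup n α ((1 - exp (-α * t)) / α) f) := by
    rw [hL]
    exact ((hf.comp measurable_add).stronglyMeasurable.integral_prod_right').measurable
  have hR : ∫ x, LOU n α t f x ^ q₂ * stableKernel n α (1 / α) x =
      ∫ x, (∫ y, f (x + y) ∂stableMeasure n α (1 / α - exp (-α * t) / α)) ^ q₂
        ∂stableMeasure n α (exp (-α * t) / α) := by
    rw [← hct, ← map_smul_stableMeasure hα hα2 hT (exp_pos (-t)), hct,
      integral_map (by fun_prop)
        (by simpa only [hL] using (hgm.pow_const q₂).aestronglyMeasurable),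
      integral_stableMeasure hα hα2 hT]
    simp only [LOU, hL, smul_eq_mul, mul_comm (stableKernel _ _ _ _)]
  have hLeft : ∫ x, f x ^ q₁ * stableKernel n α (1 / α) x =
      ∫ x, f x ^ q₁ ∂stableMeasure n α (1 / α) := by
    rw [integral_stableMeasure hα hα2 hT]
    simp only [smul_eq_mul, mul_comm (stableKernel _ _ _ _)]
  rw [hR, hLeft]
  refine integral_rpow_le_of_convolution_semigroup
    (fun t ht => isProbabilityMeasure_stableMeasure hα hα2 ht)
    (fun s hs t ht => stableMeasure_conv hα hα2 hs ht) hr hrT hq₁0 hq₁ hq₂ ?_ hf ha hab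
  have hexp : exp (-α * t) * exp (α * t) = 1 := by
    rw [← exp_add]; simp
  rw [← hrel', div_mul_eq_mul_div, div_mul_eq_mul_div]
  congr 1
  linear_combination -(1 / q₁ - 1) * hexp
end
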